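/- arXiv:2211.02871 — 3 statements merged into one kernel-verified Lean document; each statement's English description precedes it below -/
import Mathlib

section
/- Let N ≥ 2, let α be a real number with −1 ≤ α ≤ 2 and α ≠ 0, and let σ be an N-qubit operator. If the matrix (1/α)·(σ − (Tr(σ)/(2^N + α))·𝟙) is positive semidefinite, then for every i ∈ Fin N, σ is biseparable across the 1:(N−1) bipartition at qubit i. -/
open scoped ComplexOrder

noncomputable section

/-- Separability of an `N`-qubit matrix across the bipartition `X : Xᶜ`. -/
def SepAcross {N : ℕ} (X : Finset (Fin N))
    (σ : Matrix (Fin N → Fin 2) (Fin N → Fin 2) ℂ) : Prop :=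
  ∃ (K : ℕ)
    (A : Fin K → Matrix ({i // i ∈ X} → Fin 2) ({i // i ∈ X} → Fin 2) ℂ)
    (B : Fin K → Matrix ({i // i ∈ Xᶜ} → Fin 2) ({i // i ∈ Xᶜ} → Fin 2) ℂ),
    (∀ k, (A k).PosSemidef) ∧ (∀ k, (B k).PosSemidef) ∧
    ∀ x y, σ x y =
      ∑ k, A k (fun i => x i.1) (fun i => y i.1) * B k (fun i => x i.1) (fun i => y i.1)

/-- Partial transpose with respect to the qubits in `X`. -/
def pt {N : ℕ} (X : Finset (Fin N))
    (σ : Matrix (Fin N → Fin 2) (Fin N → Fin 2) ℂ) :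
    Matrix (Fin N → Fin 2) (Fin N → Fin 2) ℂ :=
  fun x y => σ (fun i => if i ∈ X then y i else x i) (fun i => if i ∈ X then x i else y i)

/-- The Dicke state `|S_k^N⟩`. -/
def dicke (N k : ℕ) : (Fin N → Fin 2) → ℂ :=
  fun x => if (Finset.univ.filter (fun i => x i = 1)).card = k
    then ((Real.sqrt (N.choose k))⁻¹ : ℝ) else 0

/-- The projector onto the symmetric subspace of `N` qubits. -/
def symProj (N : ℕ) : Matrix (Fin N → Fin 2) (Fin N → Fin 2) ℂ :=
  fun x y => ∑ k ∈ Finset.range (N + 1), dicke N k x * star (dicke N k y)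

/-- Full separability of an `N`-qubit matrix. -/
def FullySep {N : ℕ} (σ : Matrix (Fin N → Fin 2) (Fin N → Fin 2) ℂ) : Prop :=
  ∃ (K : ℕ) (A : Fin K → Fin N → Matrix (Fin 2) (Fin 2) ℂ),
    (∀ k i, (A k i).PosSemidef) ∧
    ∀ x y, σ x y = ∑ k, ∏ i, A k i (x i) (y i)

/-- The second Pauli matrix. -/
def pauliY : Matrix (Fin 2) (Fin 2) ℂ := !![0, -Complex.I; Complex.I, 0]

/-- The `N`-qubit operator acting as `σy` on each qubit in `X` and trivially elsewhere. -/
def pauliYat {N : ℕ} (X : Finset (Fin N)) :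
    Matrix (Fin N → Fin 2) (Fin N → Fin 2) ℂ :=
  fun x y => ∏ i, if i ∈ X then pauliY (x i) (y i) else (if x i = y i then 1 else 0)

/-- `(σy@X) · ρ^{T_X} · (σy@X)`. -/
def tildeAt {N : ℕ} (X : Finset (Fin N))
    (ρ : Matrix (Fin N → Fin 2) (Fin N → Fin 2) ℂ) :
    Matrix (Fin N → Fin 2) (Fin N → Fin 2) ℂ :=
  pauliYat X * pt X ρ * pauliYat X

/-- The Hankel matrix `M_l(q)` with entries `q_{i+j+l} / (N choose (i+j+l))`. -/
def hankel (N l : ℕ) (q : ℕ → ℝ) :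
    Matrix (Fin ((N - l) / 2 + 1)) (Fin ((N - l) / 2 + 1)) ℝ :=
  fun i j => q ((i : ℕ) + j + l) / (N.choose ((i : ℕ) + j + l))

/-- The diagonal symmetric state `Σ_k p_k |S_k^N⟩⟨S_k^N|`. -/
def rhoDS (N : ℕ) (p : ℕ → ℝ) : Matrix (Fin N → Fin 2) (Fin N → Fin 2) ℂ :=
  fun x y => ∑ k ∈ Finset.range (N + 1), (p k : ℂ) * dicke N k x * star (dicke N k y)

/-!
Every positive semidefinite `ρ` on a bipartite space makes `Tr(ρ) • 1 + α • ρ` separable, for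
`-1 ≤ α ≤ 2`; inverting the reduction map writes `σ` in this form. By linearity `ρ = |ψ⟩⟨ψ|`, and
by convexity in `α` only the endpoints `-1` and `2` matter. The singular value decomposition brings
`ψ` to the Schmidt form `∑ i, r i • (e i ⊗ e i)`, up to a local contraction whose defect
contributes a separable product term. Averaging a product `A ⊗ B` over the local phase unitaries
`Θ ⊗ Θᴴ` preserves separability and keeps only the diagonal and the coherences between the vectors
`e i ⊗ e i`. Suitable `A` and `B` reproduce all the coherences of the target, leaving a diagonal
matrix, which is nonnegative: at `α = 2` because `2 r i r j ≤ r i ^ 2 + r j ^ 2` for `i ≠ j`.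
-/

open Matrix
open scoped Kronecker

section SingularValueDecomposition

variable {m n 𝕜 : Type*} [Fintype m] [RCLike 𝕜]

lemma posSemidef_trace_smul_one_sub [DecidableEq m] {A : Matrix m m 𝕜} (hA : A.PosSemidef) :
    (A.trace • 1 - A).PosSemidef := by
  have hle (i : m) : (hA.1.eigenvalues i : 𝕜) ≤ A.trace := by
    rw [hA.1.trace_eq_sum_eigenvalues, ← RCLike.ofReal_sum, RCLike.ofReal_le_ofReal]
    exact Finset.single_le_sum (fun j _ => hA.eigenvalues_nonneg j) (Finset.mem_univ i)
  have hdiag : (diagonal fun i => A.trace - (hA.1.eigenvalues i : 𝕜)).PosSemidef :=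
    .diagonal fun i => sub_nonneg.2 (hle i)
  convert hdiag.mul_mul_conjTranspose_same (hA.1.eigenvectorUnitary : Matrix m m 𝕜) using 1
  calc A.trace • 1 - A
      = Unitary.conjStarAlgAut 𝕜 _ hA.1.eigenvectorUnitary
          (A.trace • 1 - diagonal (RCLike.ofReal ∘ hA.1.eigenvalues)) := by
        rw [map_sub, map_smul, map_one, ← hA.1.spectral_theorem]
    _ = _ := by
        rw [Unitary.conjStarAlgAut_apply, smul_one_eq_diagonal, diagonal_sub]
        rfl

variable [Fintype n] [DecidableEq n]

lemma posSemidef_one_sub_mul_conjTranspose {W : Matrix n m 𝕜} (hW : W * Wᴴ * W = W) :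
    (1 - W * Wᴴ).PosSemidef := by
  have hsq : (1 - W * Wᴴ) * (1 - W * Wᴴ)ᴴ = 1 - W * Wᴴ := by
    simp only [conjTranspose_sub, conjTranspose_one, conjTranspose_mul, conjTranspose_conjTranspose,
      mul_sub, sub_mul, Matrix.mul_one, Matrix.one_mul, ← Matrix.mul_assoc, hW, sub_self, sub_zero]
  exact hsq ▸ posSemidef_self_mul_conjTranspose _

variable [DecidableEq m]

lemma exists_eq_mul_diagonal_of_conjTranspose_mul_self_eq {M : Matrix n m 𝕜} {r : m → ℝ}
    (hM : Mᴴ * M = diagonal fun i => (r i : 𝕜) ^ 2) :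
    ∃ W : Matrix n m 𝕜, (1 - W * Wᴴ).PosSemidef ∧ M = W * diagonal fun i => (r i : 𝕜) := by
  set R : Matrix m m 𝕜 := diagonal fun i => (r i : 𝕜)
  set D : Matrix m m 𝕜 := diagonal fun i => (r i : 𝕜)⁻¹
  have hD : Dᴴ = D := by simp [D, diagonal_conjTranspose, Pi.star_def]
  have hkernel : 1 - D * R = diagonal fun i => if r i = 0 then 1 else 0 := by
    rw [diagonal_mul_diagonal, ← diagonal_one, diagonal_sub]
    congr 1 with i
    by_cases hr : r i = 0 <;> simp [hr]
  have hM_kernel : M * (1 - D * R) = 0 := by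
    rw [← conjTranspose_mul_self_eq_zero, conjTranspose_mul, Matrix.mul_assoc,
      ← Matrix.mul_assoc Mᴴ, hM, hkernel, diagonal_mul_diagonal]
    refine mul_eq_zero_of_right _ (diagonal_eq_zero.2 (funext fun i => ?_))
    by_cases hr : r i = 0 <;> simp [hr]
  refine ⟨M * D, posSemidef_one_sub_mul_conjTranspose ?_, ?_⟩
  · calc M * D * (M * D)ᴴ * (M * D) = M * (D * D * (Mᴴ * M) * D) := by
          simp only [conjTranspose_mul, hD, Matrix.mul_assoc]
      _ = M * D := by
          rw [hM]
          simp only [D, diagonal_mul_diagonal]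
          congr 2 with i
          by_cases hr : (r i : 𝕜) = 0
          · simp [hr]
          · field_simp
  · rwa [Matrix.mul_sub, Matrix.mul_one, sub_eq_zero, ← Matrix.mul_assoc] at hM_kernel

theorem exists_singular_value_decomposition (V : Matrix n m 𝕜) :
    ∃ (W : Matrix n m 𝕜) (r : m → ℝ) (U : unitaryGroup m 𝕜),
      (1 - W * Wᴴ).PosSemidef ∧ (∀ i, 0 ≤ r i) ∧
      V = W * diagonal (fun i => (r i : 𝕜)) * (U : Matrix m m 𝕜)ᴴ ∧
      (Vᴴ * V).trace = ((∑ i, r i ^ 2 : ℝ) : 𝕜) := by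
  have hV := posSemidef_conjTranspose_mul_self V
  set U := hV.1.eigenvectorUnitary
  set r : m → ℝ := fun i => √(hV.1.eigenvalues i)
  have hr (i : m) : r i ^ 2 = hV.1.eigenvalues i := Real.sq_sqrt (hV.eigenvalues_nonneg i)
  have hVU : (V * (U : Matrix m m 𝕜))ᴴ * (V * (U : Matrix m m 𝕜)) =
      diagonal fun i => (r i : 𝕜) ^ 2 := by
    have hspectral := hV.1.conjStarAlgAut_star_eigenvectorUnitary
    rw [Unitary.conjStarAlgAut_star_apply, star_eq_conjTranspose] at hspectral
    rw [conjTranspose_mul, Matrix.mul_assoc, ← Matrix.mul_assoc Vᴴ, ← Matrix.mul_assoc, hspectral]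
    simp only [Function.comp_def, ← hr, RCLike.ofReal_pow]
  obtain ⟨W, hW, hWV⟩ := exists_eq_mul_diagonal_of_conjTranspose_mul_self_eq hVU
  refine ⟨W, r, U, hW, fun i => Real.sqrt_nonneg _, ?_, ?_⟩
  · rw [← hWV, Matrix.mul_assoc, ← star_eq_conjTranspose, Unitary.mul_star_self_of_mem U.2,
      Matrix.mul_one]
  · simp only [hr, hV.1.trace_eq_sum_eigenvalues, RCLike.ofReal_sum]

end SingularValueDecomposition

section SeparableCone

/-- The convex cone of unnormalised separable operators on `ℂ^m ⊗ ℂ^n`, generated by the Kronecker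
products of positive semidefinite matrices. -/
def separableCone (m n : Type*) : PointedCone ℝ (Matrix (m × n) (m × n) ℂ) :=
  .hull ℝ {σ | ∃ (A : Matrix m m ℂ) (B : Matrix n n ℂ), A.PosSemidef ∧ B.PosSemidef ∧ σ = A ⊗ₖ B}

variable {m n m' n' : Type*}

lemma kronecker_mem_separableCone {A : Matrix m m ℂ} {B : Matrix n n ℂ}
    (hA : A.PosSemidef) (hB : B.PosSemidef) : A ⊗ₖ B ∈ separableCone m n :=
  PointedCone.subset_hull ⟨A, B, hA, hB, rfl⟩

lemma mem_separableCone_iff {σ : Matrix (m × n) (m × n) ℂ} :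
    σ ∈ separableCone m n ↔
      ∃ (K : ℕ) (A : Fin K → Matrix m m ℂ) (B : Fin K → Matrix n n ℂ),
        (∀ k, (A k).PosSemidef) ∧ (∀ k, (B k).PosSemidef) ∧ σ = ∑ k, A k ⊗ₖ B k := by
  constructor
  · intro hσ
    obtain ⟨K, c, g, rfl⟩ := Submodule.mem_span_set'.1 hσ
    choose A B hA hB hg using fun k => (g k).2
    refine ⟨K, fun k => (c k : ℝ) • A k, B, fun k => (hA k).smul (c k).2, hB, ?_⟩
    simp only [hg, smul_kronecker]
    rfl
  · rintro ⟨K, A, B, hA, hB, rfl⟩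
    exact Submodule.sum_mem _ fun k _ => kronecker_mem_separableCone (hA k) (hB k)

lemma conj_kronecker_mem_separableCone [Fintype m] [Fintype n] [Finite m'] [Finite n']
    (A : Matrix m' m ℂ) (B : Matrix n' n ℂ) {σ : Matrix (m × n) (m × n) ℂ}
    (hσ : σ ∈ separableCone m n) :
    (A ⊗ₖ B) * σ * (A ⊗ₖ B)ᴴ ∈ separableCone m' n' := by
  obtain ⟨K, P, Q, hP, hQ, rfl⟩ := mem_separableCone_iff.1 hσ
  simp only [Matrix.mul_sum, Matrix.sum_mul, conjTranspose_kronecker, ← mul_kronecker_mul]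
  exact Submodule.sum_mem _ fun k _ => kronecker_mem_separableCone
    ((hP k).mul_mul_conjTranspose_same A) ((hQ k).mul_mul_conjTranspose_same B)

lemma diagonal_mem_separableCone [Finite m] [Finite n] [DecidableEq m] [DecidableEq n]
    {d : m × n → ℝ} (hd : ∀ s, 0 ≤ d s) :
    diagonal (fun s => (d s : ℂ)) ∈ separableCone m n := by
  have := Fintype.ofFinite m
  have := Fintype.ofFinite n
  have hsum : diagonal (fun s => (d s : ℂ)) =
      ∑ s, d s • (diagonal (Pi.single s.1 (1 : ℂ)) ⊗ₖ diagonal (Pi.single s.2 (1 : ℂ))) := by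
    rw [← sum_single_eq_diagonal]
    simp [diagonal_single, single_kronecker_single]
  rw [hsum]
  exact Submodule.sum_mem _ fun s _ => (separableCone m n).smul_mem (hd s) <|
    kronecker_mem_separableCone (.diagonal (Pi.single_nonneg.2 zero_le_one))
      (.diagonal (Pi.single_nonneg.2 zero_le_one))

end SeparableCone

section PhaseTwirl

variable {ι : Type*} [DecidableEq ι]

-- The three cube roots of unity suffice: a nonzero exponent has a coefficient `±1` or `±2`.
open ZMod in
lemma sum_stdAddChar_eq_ite [Fintype ι] (i j k l : ι) :
    ∑ g : ι → ZMod 3, stdAddChar (g i - g j - g k + g l) =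
      if i = j ∧ k = l ∨ i = k ∧ j = l then (Fintype.card (ι → ZMod 3) : ℂ) else 0 := by
  split_ifs with h
  · have hzero (g : ι → ZMod 3) : g i - g j - g k + g l = 0 := by grind
    simp [hzero]
  · let e (a : ι) : (ι → ZMod 3) →+ ZMod 3 := Pi.evalAddMonoidHom _ a
    let χ : AddChar (ι → ZMod 3) ℂ := stdAddChar.compAddMonoidHom (e i - e j - e k + e l)
    suffices hχ : χ ≠ 0 from AddChar.sum_eq_zero_iff_ne_zero.2 hχ
    have hexponent : ∃ g : ι → ZMod 3, g i - g j - g k + g l ≠ 0 := by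
      have : (1 : ZMod 3) ≠ 0 ∧ (1 + 1 : ZMod 3) ≠ 0 := by decide
      by_cases hi : i = j ∨ i = k
      · exact ⟨Pi.single l 1, by simp only [Pi.single_apply]; grind⟩
      · exact ⟨Pi.single i 1, by simp only [Pi.single_apply]; grind⟩
    obtain ⟨g, hg⟩ := hexponent
    refine AddChar.ne_zero_iff.2 ⟨g, fun hχg => hg ?_⟩
    exact injective_stdAddChar (hχg.trans (AddChar.map_zero_eq_one _).symm)

/-- The phase twirl of `A ⊗ B`: its average under conjugation by `Θ ⊗ Θᴴ`, over the diagonal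
unitaries `Θ`. It keeps exactly the entries on which these conjugations act trivially. -/
def phaseTwirl (A B : Matrix ι ι ℂ) : Matrix (ι × ι) (ι × ι) ℂ :=
  of fun s t => if s = t ∨ s.1 = s.2 ∧ t.1 = t.2 then A s.1 t.1 * B s.2 t.2 else 0

open ZMod in
lemma phaseTwirl_mem_separableCone [Finite ι] {A B : Matrix ι ι ℂ}
    (hA : A.PosSemidef) (hB : B.PosSemidef) : phaseTwirl A B ∈ separableCone ι ι := by
  have := Fintype.ofFinite ι
  let Θ (g : ι → ZMod 3) : Matrix ι ι ℂ := diagonal fun i => stdAddChar (g i)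
  have hΘ (g) : (Θ g ⊗ₖ (Θ g)ᴴ) * (A ⊗ₖ B) * (Θ g ⊗ₖ (Θ g)ᴴ)ᴴ ∈ separableCone ι ι :=
    conj_kronecker_mem_separableCone _ _ (kronecker_mem_separableCone hA hB)
  have hentry (g : ι → ZMod 3) (i k j l : ι) :
      ((Θ g ⊗ₖ (Θ g)ᴴ) * (A ⊗ₖ B) * (Θ g ⊗ₖ (Θ g)ᴴ)ᴴ) (i, k) (j, l) =
        stdAddChar (g i - g j - g k + g l) * (A i j * B k l) := by
    have hstar (a : ZMod 3) : star (stdAddChar a : ℂ) = stdAddChar (-a) :=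
      (AddChar.map_neg_eq_conj _ _).symm
    simp only [Θ, conjTranspose_kronecker, ← mul_kronecker_mul, diagonal_conjTranspose,
      kronecker_apply, diagonal_mul, mul_diagonal, Pi.star_apply, hstar, sub_eq_add_neg,
      AddChar.map_add_eq_mul, neg_neg]
    ring
  have hcard : (Fintype.card (ι → ZMod 3) : ℂ) ≠ 0 := Nat.cast_ne_zero.2 Fintype.card_ne_zero
  have haverage : phaseTwirl A B = (Fintype.card (ι → ZMod 3) : ℝ)⁻¹ •
      ∑ g, (Θ g ⊗ₖ (Θ g)ᴴ) * (A ⊗ₖ B) * (Θ g ⊗ₖ (Θ g)ᴴ)ᴴ := by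
    ext ⟨i, k⟩ ⟨j, l⟩
    simp only [phaseTwirl, Matrix.smul_apply, Matrix.sum_apply, hentry, ← Finset.sum_mul,
      sum_stdAddChar_eq_ite, of_apply, Prod.mk.injEq]
    split_ifs
    · rw [Complex.real_smul, ← mul_assoc, Complex.ofReal_inv, Complex.ofReal_natCast,
        inv_mul_cancel₀ hcard, one_mul]
    · simp
  rw [haverage]
  exact (separableCone ι ι).smul_mem (by positivity) (Submodule.sum_mem _ fun g _ => hΘ g)

end PhaseTwirl

section SchmidtVector

variable {ι : Type*} [DecidableEq ι]

/-- The vector `∑ i, r i • (e i ⊗ e i)`, in Schmidt form with coefficients `r`. -/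
def schmidtVector (r : ι → ℝ) : ι × ι → ℂ :=
  vec (diagonal fun i => (r i : ℂ))

lemma vecMulVec_schmidtVector_apply (r : ι → ℝ) (i k j l : ι) :
    vecMulVec (schmidtVector r) (star (schmidtVector r)) (i, k) (j, l) =
      if i = k ∧ j = l then (r i * r j : ℂ) else 0 := by
  by_cases hik : i = k <;> by_cases hjl : j = l <;>
    simp [vecMulVec_apply, schmidtVector, vec, hik, hjl, eq_comm]

variable [Fintype ι]

lemma smul_one_sub_vecMulVec_schmidtVector_mem_separableCone (r : ι → ℝ) :
    (∑ i, r i ^ 2) • 1 - vecMulVec (schmidtVector r) (star (schmidtVector r)) ∈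
      separableCone ι ι := by
  let v : ι → ℂ := fun i => r i
  have hdecomposition :
      (∑ i, r i ^ 2) • 1 - vecMulVec (schmidtVector r) (star (schmidtVector r)) =
        phaseTwirl (vecMulVec 1 (star 1))
          ((vecMulVec v (star v)).trace • 1 - vecMulVec v (star v)) +
        diagonal fun s => ((if s.1 = s.2 then 0 else r s.2 ^ 2 : ℝ) : ℂ) := by
    ext ⟨i, k⟩ ⟨j, l⟩
    rw [Matrix.sub_apply, Matrix.add_apply, Matrix.smul_apply, vecMulVec_schmidtVector_apply]
    by_cases hst : i = j ∧ k = l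
    · obtain ⟨rfl, rfl⟩ := hst
      by_cases hik : i = k <;> simp [phaseTwirl, vecMulVec_apply, v, hik, dotProduct, sq]
    · by_cases hcoherent : i = k ∧ j = l
      · obtain ⟨rfl, rfl⟩ := hcoherent
        have hij : i ≠ j := by simpa using hst
        simp [phaseTwirl, vecMulVec_apply, v, hij]
      · simp [phaseTwirl, hst, hcoherent]
  rw [hdecomposition]
  exact add_mem
    (phaseTwirl_mem_separableCone (posSemidef_vecMulVec_self_star 1)
      (posSemidef_trace_smul_one_sub (posSemidef_vecMulVec_self_star v)))
    (diagonal_mem_separableCone fun s => by positivity)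

lemma smul_one_add_two_smul_vecMulVec_schmidtVector_mem_separableCone {r : ι → ℝ}
    (hr : ∀ i, 0 ≤ r i) :
    (∑ i, r i ^ 2) • 1 + (2 : ℝ) • vecMulVec (schmidtVector r) (star (schmidtVector r)) ∈
      separableCone ι ι := by
  let w : ι → ℂ := fun i => √(r i)
  have hsqrt (i : ι) : (√(r i) : ℂ) * √(r i) = r i := by
    rw [← Complex.ofReal_mul, Real.mul_self_sqrt (hr i)]
  have hdecomposition :
      (∑ i, r i ^ 2) • 1 +
          (2 : ℝ) • vecMulVec (schmidtVector r) (star (schmidtVector r)) =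
        (2 : ℝ) • phaseTwirl (vecMulVec w (star w)) (vecMulVec w (star w)) +
        diagonal fun s =>
          ((∑ i, r i ^ 2 - if s.1 = s.2 then 0 else 2 * r s.1 * r s.2 : ℝ) : ℂ) := by
    ext ⟨i, k⟩ ⟨j, l⟩
    rw [Matrix.add_apply, Matrix.add_apply, Matrix.smul_apply, Matrix.smul_apply,
      vecMulVec_schmidtVector_apply]
    by_cases hst : i = j ∧ k = l
    · obtain ⟨rfl, rfl⟩ := hst
      by_cases hik : i = k <;> simp [phaseTwirl, vecMulVec_apply, w, hik, hsqrt] <;> ring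
    · by_cases hcoherent : i = k ∧ j = l
      · obtain ⟨rfl, rfl⟩ := hcoherent
        have hij : i ≠ j := by simpa using hst
        have hsqrt_mul := mul_mul_mul_comm (√(r i) : ℂ) √(r j) √(r i) √(r j)
        rw [hsqrt, hsqrt] at hsqrt_mul
        simp [phaseTwirl, vecMulVec_apply, w, hij, hsqrt_mul]
      · simp [phaseTwirl, hst, hcoherent]
  rw [hdecomposition]
  have hw := posSemidef_vecMulVec_self_star w
  refine add_mem ((separableCone ι ι).smul_mem zero_le_two (phaseTwirl_mem_separableCone hw hw))
    (diagonal_mem_separableCone fun s => ?_)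
  split_ifs with hs
  · simpa only [sub_zero] using Finset.sum_nonneg fun i _ => sq_nonneg (r i)
  · have hpair : r s.1 ^ 2 + r s.2 ^ 2 ≤ ∑ i, r i ^ 2 :=
      Finset.add_le_sum (fun i _ => sq_nonneg (r i)) (Finset.mem_univ _) (Finset.mem_univ _) hs
    linarith [two_mul_le_add_sq (r s.1) (r s.2)]

lemma smul_one_add_smul_vecMulVec_schmidtVector_mem_separableCone {r : ι → ℝ}
    (hr : ∀ i, 0 ≤ r i) {α : ℝ} (hα1 : -1 ≤ α) (hα2 : α ≤ 2) :
    (∑ i, r i ^ 2) • 1 + α • vecMulVec (schmidtVector r) (star (schmidtVector r)) ∈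
      separableCone ι ι := by
  convert add_mem
    ((separableCone ι ι).smul_mem (show 0 ≤ (2 - α) / 3 by linarith)
      (smul_one_sub_vecMulVec_schmidtVector_mem_separableCone r))
    ((separableCone ι ι).smul_mem (show 0 ≤ (1 + α) / 3 by linarith)
      (smul_one_add_two_smul_vecMulVec_schmidtVector_mem_separableCone hr)) using 1
  module

end SchmidtVector

section InverseReduction

variable {m n : Type*} [Fintype m] [Fintype n] [DecidableEq m] [DecidableEq n]

lemma trace_smul_one_add_smul_vecMulVec_mem_separableCone (ψ : m × n → ℂ) {α : ℝ}
    (hα1 : -1 ≤ α) (hα2 : α ≤ 2) :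
    (vecMulVec ψ (star ψ)).trace • 1 + α • vecMulVec ψ (star ψ) ∈ separableCone m n := by
  obtain ⟨V, rfl⟩ := vec_bijective.surjective ψ
  obtain ⟨W, r, U, hW, hr, hV, htrace⟩ := exists_singular_value_decomposition V
  let δ := schmidtVector r
  let M : Matrix (m × n) (m × m) ℂ := (U : Matrix m m ℂ)ᴴᵀ ⊗ₖ W
  have hMδ : M *ᵥ δ = vec V :=
    (kronecker_mulVec_vec W _ _).trans (congrArg vec hV.symm)
  have hUU : (U : Matrix m m ℂ)ᴴᵀ * (U : Matrix m m ℂ)ᴴᵀᴴ = 1 := by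
    rw [conjTranspose_transpose_eq_transpose_conjTranspose, conjTranspose_conjTranspose,
      ← transpose_mul, ← star_eq_conjTranspose, Unitary.mul_star_self_of_mem U.2, transpose_one]
  have hone : (1 : Matrix m m ℂ) ⊗ₖ (1 - W * Wᴴ) + M * Mᴴ = 1 := by
    rw [conjTranspose_kronecker, ← mul_kronecker_mul, hUU, ← kronecker_add, sub_add_cancel,
      one_kronecker_one]
  have hψ : vecMulVec (vec V) (star (vec V)) = M * vecMulVec δ (star δ) * Mᴴ := by
    rw [← hMδ, star_mulVec, mul_vecMulVec, vecMulVec_mul]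
  have htrace_ψ : (vecMulVec (vec V) (star (vec V))).trace = ((∑ i, r i ^ 2 : ℝ) : ℂ) := by
    rw [trace_vecMulVec, dotProduct_comm, star_vec_dotProduct_vec, htrace]
    rfl
  have hdecomposition :
      (vecMulVec (vec V) (star (vec V))).trace • 1 + α • vecMulVec (vec V) (star (vec V)) =
        (∑ i, r i ^ 2) • ((1 : Matrix m m ℂ) ⊗ₖ (1 - W * Wᴴ)) +
          M * ((∑ i, r i ^ 2) • 1 + α • vecMulVec δ (star δ)) * Mᴴ := by
    rw [htrace_ψ, hψ, ← hone]
    simp only [Matrix.mul_add, Matrix.add_mul, Matrix.mul_smul, Matrix.smul_mul, Matrix.mul_one,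
      Complex.coe_smul]
    module
  rw [hdecomposition]
  exact add_mem
    ((separableCone m n).smul_mem (by positivity) (kronecker_mem_separableCone .one hW))
    (conj_kronecker_mem_separableCone _ _
      (smul_one_add_smul_vecMulVec_schmidtVector_mem_separableCone hr hα1 hα2))

theorem trace_smul_one_add_smul_mem_separableCone {ρ : Matrix (m × n) (m × n) ℂ}
    (hρ : ρ.PosSemidef) {α : ℝ} (hα1 : -1 ≤ α) (hα2 : α ≤ 2) :
    ρ.trace • 1 + α • ρ ∈ separableCone m n := by
  obtain ⟨K, ψ, rfl⟩ := posSemidef_iff_eq_sum_vecMulVec.1 hρ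
  rw [trace_sum, Finset.sum_smul, Finset.smul_sum, ← Finset.sum_add_distrib]
  exact Submodule.sum_mem _ fun k _ =>
    trace_smul_one_add_smul_vecMulVec_mem_separableCone (ψ k) hα1 hα2

lemma eq_trace_smul_one_add_smul {𝕜 : Type*} [Field 𝕜] {α : 𝕜} (hα : α ≠ 0)
    (hcard : (Fintype.card m : 𝕜) + α ≠ 0) {σ ρ : Matrix m m 𝕜}
    (hρ : ρ = α⁻¹ • (σ - (σ.trace / (Fintype.card m + α)) • 1)) :
    σ = ρ.trace • 1 + α • ρ := by
  have htrace : ρ.trace = σ.trace / (Fintype.card m + α) := by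
    rw [hρ, trace_smul, trace_sub, trace_smul, trace_one, smul_eq_mul, smul_eq_mul]
    field_simp
    ring
  rw [htrace, hρ, smul_inv_smul₀ hα, add_sub_cancel]

end InverseReduction

section Bipartition

/-- Splits a function on `ι` into its restrictions to `X` and `Xᶜ`; for computational basis indices,
this is the identification `(ℂ^β)^⊗ι ≃ (ℂ^β)^⊗X ⊗ (ℂ^β)^⊗Xᶜ`. -/
def bipartitionEquiv {ι : Type*} [Fintype ι] [DecidableEq ι] (β : Type*) (X : Finset ι) :
    (ι → β) ≃ ({i // i ∈ X} → β) × ({i // i ∈ Xᶜ} → β) :=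
  (Equiv.piEquivPiSubtypeProd (· ∈ X) _).trans <| .prodCongr (.refl _) <|
    .arrowCongr (Equiv.subtypeEquivRight fun _ => Finset.mem_compl.symm) (.refl _)

lemma sepAcross_iff_submatrix_mem_separableCone {N : ℕ} {X : Finset (Fin N)}
    {σ : Matrix (Fin N → Fin 2) (Fin N → Fin 2) ℂ} :
    SepAcross X σ ↔
      σ.submatrix (bipartitionEquiv (Fin 2) X).symm (bipartitionEquiv (Fin 2) X).symm ∈
        separableCone _ _ := by
  rw [mem_separableCone_iff]
  refine exists_congr fun K => exists_congr fun A => exists_congr fun B =>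
    and_congr_right fun _ => and_congr_right fun _ => ?_
  let e := bipartitionEquiv (Fin 2) X
  calc (∀ x y, σ x y =
        ∑ k, A k (fun i => x i.1) (fun i => y i.1) * B k (fun i => x i.1) (fun i => y i.1))
      ↔ ∀ x y, σ x y = (∑ k, A k ⊗ₖ B k) (e x) (e y) := by
        simp only [Matrix.sum_apply]
        rfl
    _ ↔ ∀ s t, σ (e.symm s) (e.symm t) = (∑ k, A k ⊗ₖ B k) s t := by
        simp only [e.forall_congr_left, Equiv.apply_symm_apply]
    _ ↔ σ.submatrix e.symm e.symm = ∑ k, A k ⊗ₖ B k := ext_iff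

end Bipartition

theorem stmt1_general (N : ℕ) (hN : N ≠ 0)
    (α : ℝ) (hα1 : -1 ≤ α) (hα2 : α ≤ 2) (hα0 : α ≠ 0)
    (σ : Matrix (Fin N → Fin 2) (Fin N → Fin 2) ℂ)
    (h : (((α⁻¹ : ℝ) : ℂ) •
        (σ - (σ.trace / ((2 ^ N + α : ℝ) : ℂ)) •
          (1 : Matrix (Fin N → Fin 2) (Fin N → Fin 2) ℂ))).PosSemidef)
    (X : Finset (Fin N)) :
    SepAcross X σ := by
  have hcard : ((Fintype.card (Fin N → Fin 2) : ℂ) + α) = ((2 ^ N + α : ℝ) : ℂ) := by simp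
  have hpos : 0 < 2 ^ N + α := by
    have : (1 : ℝ) < 2 ^ N := one_lt_pow₀ one_lt_two hN
    linarith
  have hσ := eq_trace_smul_one_add_smul (σ := σ) (Complex.ofReal_ne_zero.2 hα0)
    (hcard ▸ Complex.ofReal_ne_zero.2 hpos.ne') (by rw [hcard, ← Complex.ofReal_inv])
  set ρ := ((α⁻¹ : ℝ) : ℂ) • (σ - (σ.trace / ((2 ^ N + α : ℝ) : ℂ)) • 1)
  let e := (bipartitionEquiv (Fin 2) X).symm
  have hmem := trace_smul_one_add_smul_mem_separableCone (h.submatrix e) hα1 hα2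
  have htrace : (ρ.submatrix e e).trace = ρ.trace := e.sum_comp fun x => ρ x x
  rw [sepAcross_iff_submatrix_mem_separableCone, hσ]
  convert hmem using 1
  ext s t
  simp [htrace, e, Matrix.one_apply]

/-- Sufficient `(N-1)`-entanglement-depth criterion from the inverse reduction map. -/
theorem stmt1 (N : ℕ) (hN : 2 ≤ N)
    (α : ℝ) (hα1 : -1 ≤ α) (hα2 : α ≤ 2) (hα0 : α ≠ 0)
    (σ : Matrix (Fin N → Fin 2) (Fin N → Fin 2) ℂ)
    (h : (((α⁻¹ : ℝ) : ℂ) •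
        (σ - (σ.trace / ((2 ^ N + α : ℝ) : ℂ)) •
          (1 : Matrix (Fin N → Fin 2) (Fin N → Fin 2) ℂ))).PosSemidef)
    (i : Fin N) :
    SepAcross {i} σ :=
  stmt1_general N (by omega) α hα1 hα2 hα0 σ h {i}
end
end

section
/- Let N = 2 and let ρ be a positive semidefinite 2-qubit operator supported on the symmetric subspace, i.e. 𝟙_S · ρ · 𝟙_S = ρ. Then for every real α with −3/4 ≤ α ≤ 1, the matrix σ = Tr(ρ)·𝟙_S + α·ρ is separable across the bipartition {0} : {1}. -/
open scoped ComplexOrder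

noncomputable section

/-!
By the spectral theorem `ρ` is a sum of operators `|ψ⟩⟨ψ|` with `ψ` symmetric, and the claim is
additive in `ρ`, so one may take `ρ = |ψ⟩⟨ψ|`. The coefficients of `ψ` form a symmetric `2 × 2`
matrix, and its Takagi factorization gives an orthonormal basis `u, v` of `ℂ²` with
`ψ = a uu + b vv`, where `a` and `b` are real. In this basis `Tr(ρ) 𝟙_S + α ρ` is the operator
`p |uu⟩⟨uu| + q |vv⟩⟨vv| + r |uv + vu⟩⟨uv + vu| + t (|uu⟩⟨vv| + |vv⟩⟨uu|)` with
`p = n + α a²`, `q = n + α b²`, `r = n / 2`, `t = α a b` and `n = a² + b²`.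

Such an operator is separable as soon as `|t| ≤ r` and `r² ≤ p q`: up to a multiple of `|vv⟩⟨vv|`
it is a positive combination of the projectors onto `(u ± k v)⊗²` and `(u ± i k v)⊗²`, for a
suitable real `k`. Here `|t| ≤ r` follows from `|α| ≤ 1`, and `r² ≤ p q` from
`p q = (1 + α) n² + t²` and `1 + α ≥ 1/4`.
-/

section Takagi

open Module Matrix
open scoped InnerProductSpace

variable {E : Type*} [NormedAddCommGroup E] [InnerProductSpace ℂ E] [FiniteDimensional ℂ E]

-- Over the reals `T` is a symmetric operator, hence has an eigenvector `u` with real eigenvalue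
-- `s`; antilinearity makes `i u` an eigenvector for `-s`.
lemma exists_norm_eq_one_antilinear_eigenvector [Nontrivial E] (T : E →ₗ⋆[ℂ] E)
    (hT : ∀ x y, ⟪T x, y⟫_ℂ = ⟪T y, x⟫_ℂ) :
    ∃ u : E, ‖u‖ = 1 ∧ ∃ s : ℝ, 0 ≤ s ∧ T u = (s : ℂ) • u := by
  let : InnerProductSpace ℝ E := InnerProductSpace.rclikeToReal ℂ E
  let Tℝ : E →ₗ[ℝ] E :=
    { toFun := T
      map_add' := map_add T
      map_smul' := fun r x => by
        simp only [← Complex.coe_smul, map_smulₛₗ, Complex.conj_ofReal, RingHom.id_apply] }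
  have hsymm : Tℝ.IsSymmetric := fun x y => by
    change RCLike.re ⟪T x, y⟫_ℂ = RCLike.re ⟪x, T y⟫_ℂ
    rw [hT, inner_re_symm]
  obtain ⟨u, hu⟩ := hsymm.hasEigenvalue_iSup_of_finiteDimensional.exists_hasEigenvector
  obtain ⟨s, hs⟩ : ∃ s : ℝ, T u = (s : ℂ) • u := ⟨_, hu.apply_eq_smul⟩
  have hunit : ‖(‖u‖⁻¹ : ℂ) • u‖ = 1 := norm_smul_inv_norm hu.2
  set w : E := (‖u‖⁻¹ : ℂ) • u
  have hw : T w = (s : ℂ) • w := by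
    rw [map_smulₛₗ, hs, map_inv₀, Complex.conj_ofReal, smul_comm]
  rcases le_total 0 s with hs0 | hs0
  · exact ⟨w, hunit, s, hs0, hw⟩
  · refine ⟨Complex.I • w, by rw [norm_smul, Complex.norm_I, hunit, one_mul], -s,
      neg_nonneg.2 hs0, ?_⟩
    rw [map_smulₛₗ, hw, Complex.conj_I, Complex.ofReal_neg, neg_smul, neg_smul, smul_comm]

lemma exists_orthonormalBasis_antilinear_eigenvectors {n : ℕ} (hn : finrank ℂ E = n)
    (T : E →ₗ⋆[ℂ] E) (hT : ∀ x y, ⟪T x, y⟫_ℂ = ⟪T y, x⟫_ℂ) :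
    ∃ (b : OrthonormalBasis (Fin n) ℂ E) (s : Fin n → ℝ),
      ∀ i, 0 ≤ s i ∧ T (b i) = (s i : ℂ) • b i := by
  induction n generalizing E with
  | zero => exact ⟨(stdOrthonormalBasis ℂ E).reindex (finCongr hn), Fin.elim0, fun i => i.elim0⟩
  | succ n ih =>
    have : Nontrivial E := nontrivial_of_finrank_eq_succ hn
    have : Fact (finrank ℂ E = n + 1) := ⟨hn⟩
    obtain ⟨u, hu, t, ht, hTu⟩ := exists_norm_eq_one_antilinear_eigenvector T hT
    have hu0 : u ≠ 0 := norm_ne_zero_iff.1 (hu ▸ one_ne_zero)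
    have hinv : ∀ x ∈ (ℂ ∙ u)ᗮ, T x ∈ (ℂ ∙ u)ᗮ := fun x hx => by
      rw [Submodule.mem_orthogonal_singleton_iff_inner_left] at hx ⊢
      rw [hT, hTu, inner_smul_left, inner_eq_zero_symm.1 hx, mul_zero]
    obtain ⟨b, s, hb⟩ := ih (Submodule.finrank_orthogonal_span_singleton hu0) (T.restrict hinv)
      fun x y => hT x y
    have hortho : Orthonormal ℂ (vecCons u fun i => (b i : E)) := orthonormal_vecCons_iff.2
      ⟨hu, fun i => Submodule.mem_orthogonal_singleton_iff_inner_right.1 (b i).2,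
        b.orthonormal.comp_linearIsometry (ℂ ∙ u)ᗮ.subtypeₗᵢ⟩
    refine ⟨OrthonormalBasis.mk hortho ?_, vecCons t s, Fin.cases ?_ fun i => ?_⟩
    · exact (hortho.linearIndependent.span_eq_top_of_card_eq_finrank' (by simp [hn])).ge
    · simpa using ⟨ht, hTu⟩
    · simpa using ⟨(hb i).1, congrArg Subtype.val (hb i).2⟩

theorem exists_unitary_eq_mul_diagonal_mul_transpose {n : Type*} [Fintype n] [DecidableEq n]
    {S : Matrix n n ℂ} (hS : S.IsSymm) :
    ∃ U ∈ unitaryGroup n ℂ, ∃ s : n → ℝ, (∀ i, 0 ≤ s i) ∧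
      S = U * diagonal (fun i => (s i : ℂ)) * Uᵀ := by
  let T : EuclideanSpace ℂ n →ₗ⋆[ℂ] EuclideanSpace ℂ n :=
    { toFun := fun x => WithLp.toLp 2 (S *ᵥ star x.ofLp)
      map_add' := fun x y => by simp [mulVec_add]
      map_smul' := fun c x => by simp [mulVec_smul] }
  have hT : ∀ x y, ⟪T x, y⟫_ℂ = ⟪T y, x⟫_ℂ := fun x y => by
    simp only [T, LinearMap.coe_mk, AddHom.coe_mk, EuclideanSpace.inner_eq_star_dotProduct,
      star_mulVec, star_star]
    rw [dotProduct_comm x.ofLp, ← mulVec_transpose, dotProduct_mulVec, hS.conjTranspose.eq]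
  obtain ⟨b, s, hb⟩ := exists_orthonormalBasis_antilinear_eigenvectors
    finrank_euclideanSpace T hT
  let e := Fintype.equivFin n
  let U : Matrix n n ℂ := (EuclideanSpace.basisFun n ℂ).toBasis.toMatrix (b.reindex e.symm)
  have hU : U ∈ unitaryGroup n ℂ :=
    (EuclideanSpace.basisFun n ℂ).toMatrix_orthonormalBasis_mem_unitary (b.reindex e.symm)
  have hSU : S * Uᴴᵀ = U * diagonal (fun i => (s (e i) : ℂ)) := by
    ext i j
    have hbj : (S *ᵥ star (b (e j)).ofLp) i = s (e j) * (b (e j)).ofLp i :=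
      congrArg (fun v => v.ofLp i) (hb (e j)).2
    simpa [U, mul_apply, mulVec, dotProduct, mul_comm, Basis.toMatrix_apply, diagonal_apply]
      using hbj
  refine ⟨U, hU, s ∘ e, fun i => (hb _).1, ?_⟩
  calc
    S = S * (U * Uᴴ)ᵀ := by
      rw [← star_eq_conjTranspose, mem_unitaryGroup_iff.1 hU, transpose_one, mul_one]
    _ = U * diagonal (fun i => (s (e i) : ℂ)) * Uᵀ := by
      rw [transpose_mul, ← mul_assoc, hSU]

end Takagi

namespace SepAcross

variable {N : ℕ} {X : Finset (Fin N)} {σ τ : Matrix (Fin N → Fin 2) (Fin N → Fin 2) ℂ}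

lemma zero : SepAcross X 0 :=
  ⟨0, Fin.elim0, Fin.elim0, fun k => k.elim0, fun k => k.elim0, fun _ _ => rfl⟩

lemma add (hσ : SepAcross X σ) (hτ : SepAcross X τ) : SepAcross X (σ + τ) := by
  obtain ⟨K, A, B, hA, hB, h⟩ := hσ
  obtain ⟨L, A', B', hA', hB', h'⟩ := hτ
  refine ⟨K + L, Fin.append A A', Fin.append B B', fun k => ?_, fun k => ?_, fun x y => ?_⟩
  · exact k.addCases (by simpa using hA) (by simpa using hA')
  · exact k.addCases (by simpa using hB) (by simpa using hB')
  · simp [Fin.sum_univ_add, h, h']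

lemma smul (hσ : SepAcross X σ) {c : ℝ} (hc : 0 ≤ c) : SepAcross X (c • σ) := by
  obtain ⟨K, A, B, hA, hB, h⟩ := hσ
  exact ⟨K, fun k => c • A k, B, fun k => (hA k).smul hc, hB, fun x y => by
    simp [h, Finset.mul_sum, mul_assoc]⟩

lemma sum {ι : Type*} {s : Finset ι} {f : ι → Matrix (Fin N → Fin 2) (Fin N → Fin 2) ℂ}
    (hf : ∀ i ∈ s, SepAcross X (f i)) : SepAcross X (∑ i ∈ s, f i) :=
  Finset.sum_induction f (SepAcross X) (fun _ _ => add) zero hf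

end SepAcross

section KetBra

open Matrix

/-- The operator `|ψ⟩⟨φ|`, in terms of which all operators below are written. -/
def ketBra {ι : Type*} (ψ φ : ι → ℂ) : Matrix ι ι ℂ := vecMulVec ψ (star φ)

lemma ketBra_apply {ι : Type*} (ψ φ : ι → ℂ) (x y : ι) : ketBra ψ φ x y = ψ x * star (φ y) := rfl

lemma posSemidef_ketBra_self {ι : Type*} [Finite ι] (ψ : ι → ℂ) : (ketBra ψ ψ).PosSemidef :=
  posSemidef_vecMulVec_self_star ψ

lemma mul_ketBra_mul_conjTranspose {ι : Type*} [Fintype ι] (M : Matrix ι ι ℂ) (ψ φ : ι → ℂ) :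
    M * ketBra ψ φ * Mᴴ = ketBra (M *ᵥ ψ) (M *ᵥ φ) := by
  rw [ketBra, ketBra, mul_vecMulVec, vecMulVec_mul, star_mulVec]

lemma ketBra_smul_smul {ι : Type*} (c : ℂ) (ψ : ι → ℂ) :
    ketBra (c • ψ) (c • ψ) = (‖c‖ ^ 2) • ketBra ψ ψ := by
  ext x y
  simp only [ketBra_apply, Pi.smul_apply, smul_eq_mul, Matrix.smul_apply, star_mul',
    Complex.real_smul, Complex.ofReal_pow, ← Complex.mul_conj', Complex.star_def]
  ring

lemma sepAcross_ketBra_of_eq_mul {N : ℕ} {X : Finset (Fin N)} (f : ({i // i ∈ X} → Fin 2) → ℂ)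
    (g : ({i // i ∈ Xᶜ} → Fin 2) → ℂ) {ψ : (Fin N → Fin 2) → ℂ}
    (hψ : ∀ x, ψ x = f (fun i => x i) * g (fun i => x i)) :
    SepAcross X (ketBra ψ ψ) :=
  ⟨1, fun _ => ketBra f f, fun _ => ketBra g g, fun _ => posSemidef_ketBra_self f,
    fun _ => posSemidef_ketBra_self g, fun x y => by
      simp only [ketBra_apply, hψ, star_mul', Fin.sum_univ_one]
      ring⟩

end KetBra

section SymmetricSubspace

open Matrix

/-- Membership of an `N`-qubit vector in the symmetric subspace, stated as invariance of the
coefficients under permutations of the qubits. -/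
def IsPermInvariant {N : ℕ} (ψ : (Fin N → Fin 2) → ℂ) : Prop :=
  ∀ (π : Equiv.Perm (Fin N)) (x : Fin N → Fin 2), ψ (x ∘ π) = ψ x

lemma isPermInvariant_dicke (N k : ℕ) : IsPermInvariant (dicke N k) := fun π x => by
  have hcard : (Finset.univ.filter fun i => (x ∘ π) i = 1).card =
      (Finset.univ.filter fun i => x i = 1).card :=
    Finset.card_equiv π (by simp)
  simp only [dicke, hcard]

lemma isPermInvariant_symProj_mulVec {N : ℕ} (ψ : (Fin N → Fin 2) → ℂ) :
    IsPermInvariant (symProj N *ᵥ ψ) := fun π x => by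
  simp only [mulVec, dotProduct, symProj, isPermInvariant_dicke _ _ π x]

lemma symProj_eq_sum_ketBra (N : ℕ) :
    symProj N = ∑ k ∈ Finset.range (N + 1), ketBra (dicke N k) (dicke N k) := by
  ext x y
  simp only [symProj, Matrix.sum_apply, ketBra_apply]

lemma isHermitian_symProj (N : ℕ) : (symProj N).IsHermitian := by
  rw [symProj_eq_sum_ketBra]
  exact (posSemidef_sum _ fun k _ => posSemidef_ketBra_self (dicke N k)).isHermitian

lemma exists_eq_sum_ketBra_isPermInvariant {N : ℕ}
    {ρ : Matrix (Fin N → Fin 2) (Fin N → Fin 2) ℂ} (hρ : ρ.PosSemidef)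
    (hsupp : symProj N * ρ * symProj N = ρ) :
    ∃ (m : ℕ) (ψ : Fin m → (Fin N → Fin 2) → ℂ),
      (∀ k, IsPermInvariant (ψ k)) ∧ ρ = ∑ k, ketBra (ψ k) (ψ k) := by
  obtain ⟨m, φ, hφ⟩ := posSemidef_iff_eq_sum_vecMulVec.1 hρ
  refine ⟨m, fun k => symProj N *ᵥ φ k, fun k => isPermInvariant_symProj_mulVec _, ?_⟩
  calc
    ρ = symProj N * (∑ k, ketBra (φ k) (φ k)) * (symProj N)ᴴ := by
      rw [(isHermitian_symProj N).eq, ← hsupp, hφ]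
      rfl
    _ = ∑ k, ketBra (symProj N *ᵥ φ k) (symProj N *ᵥ φ k) := by
      simp only [Finset.mul_sum, Finset.sum_mul, mul_ketBra_mul_conjTranspose]

lemma symProj_two_apply (x y : Fin 2 → Fin 2) :
    symProj 2 x y = 2⁻¹ *
      ((1 : Matrix _ _ ℂ) (x 0) (y 0) * (1 : Matrix _ _ ℂ) (x 1) (y 1) +
        (1 : Matrix _ _ ℂ) (x 0) (y 1) * (1 : Matrix _ _ ℂ) (x 1) (y 0)) := by
  have hcard (z : Fin 2 → Fin 2) :
      (Finset.univ.filter fun i => z i = 1).card = (z 0 : ℕ) + (z 1 : ℕ) := by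
    revert z
    decide
  have hsqrt : (√2 : ℂ)⁻¹ * (√2 : ℂ)⁻¹ = 2⁻¹ := by
    rw [← mul_inv, ← Complex.ofReal_mul, Real.mul_self_sqrt zero_le_two, Complex.ofReal_ofNat]
  simp only [symProj, dicke, hcard, Finset.sum_range_succ, Finset.sum_range_zero]
  generalize x 0 = i, x 1 = j, y 0 = k, y 1 = l
  fin_cases i <;> fin_cases j <;> fin_cases k <;> fin_cases l <;> norm_num [hsqrt]

end SymmetricSubspace

section TwoQubits

open Matrix

/-- The product vector `u ⊗ v`, with `u` on qubit `0` and `v` on qubit `1`; projectors onto product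
vectors are the elementary separable operators. -/
def tensor (u v : Fin 2 → ℂ) : (Fin 2 → Fin 2) → ℂ := fun x => u (x 0) * v (x 1)

local infixl:75 " ⊗ " => tensor

lemma star_tensor_dotProduct_tensor (u v u' v' : Fin 2 → ℂ) :
    star (u ⊗ v) ⬝ᵥ (u' ⊗ v') = (star u ⬝ᵥ u') * (star v ⬝ᵥ v') := by
  simp only [dotProduct, tensor, Pi.star_apply, star_mul', Finset.sum_mul_sum]
  rw [← (finTwoArrowEquiv (Fin 2)).symm.sum_comp, Fintype.sum_prod_type]
  exact Finset.sum_congr rfl fun i _ => Finset.sum_congr rfl fun j _ => mul_mul_mul_comm _ _ _ _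

lemma sepAcross_ketBra_tensor (u v : Fin 2 → ℂ) : SepAcross {0} (ketBra (u ⊗ v) (u ⊗ v)) :=
  sepAcross_ketBra_of_eq_mul (fun x => u (x ⟨0, by simp⟩)) (fun x => v (x ⟨1, by simp⟩))
    fun _ => rfl

lemma ketBra_tensor_parallelogram (u w : Fin 2 → ℂ) :
    ketBra ((u + w) ⊗ (u + w)) ((u + w) ⊗ (u + w)) +
      ketBra ((u - w) ⊗ (u - w)) ((u - w) ⊗ (u - w)) =
    (2 : ℝ) • (ketBra (u ⊗ u + w ⊗ w) (u ⊗ u + w ⊗ w) +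
      ketBra (u ⊗ w + w ⊗ u) (u ⊗ w + w ⊗ u)) := by
  ext x y
  simp only [ketBra_apply, tensor, Matrix.add_apply, Matrix.smul_apply, Pi.add_apply,
    Pi.sub_apply, star_add, star_sub, star_mul', Complex.real_smul, Complex.ofReal_ofNat]
  ring

lemma sepAcross_ketBra_add_tensor (u w : Fin 2 → ℂ) :
    SepAcross {0} (ketBra (u ⊗ u + w ⊗ w) (u ⊗ u + w ⊗ w) +
      ketBra (u ⊗ w + w ⊗ u) (u ⊗ w + w ⊗ u)) := by
  have h := ((sepAcross_ketBra_tensor (u + w) (u + w)).add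
    (sepAcross_ketBra_tensor (u - w) (u - w))).smul (c := 2⁻¹) (by norm_num)
  rwa [ketBra_tensor_parallelogram, inv_smul_smul₀ two_ne_zero] at h

lemma sepAcross_ketBra_sub_tensor (u w : Fin 2 → ℂ) :
    SepAcross {0} (ketBra (u ⊗ u - w ⊗ w) (u ⊗ u - w ⊗ w) +
      ketBra (u ⊗ w + w ⊗ u) (u ⊗ w + w ⊗ u)) := by
  have h := sepAcross_ketBra_add_tensor u (Complex.I • w)
  have hsub : u ⊗ u + (Complex.I • w) ⊗ (Complex.I • w) = u ⊗ u - w ⊗ w := by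
    ext x
    simp only [tensor, Pi.add_apply, Pi.sub_apply, Pi.smul_apply, smul_eq_mul]
    linear_combination w (x 0) * w (x 1) * Complex.I_mul_I
  have hphase : u ⊗ (Complex.I • w) + (Complex.I • w) ⊗ u = Complex.I • (u ⊗ w + w ⊗ u) := by
    ext x
    simp only [tensor, Pi.add_apply, Pi.smul_apply, smul_eq_mul]
    ring
  rwa [hsub, hphase, ketBra_smul_smul, Complex.norm_I, one_pow, one_smul] at h

/-- A symmetric X-state: an operator that is X-shaped in the vectors `uu`, `uv + vu`, `vv`. It is
the form taken by `Tr(ρ) 𝟙_S + α ρ` for `ρ = |ψ⟩⟨ψ|` in the Takagi basis `u, v` of `ψ`. The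
vector `uv + vu` is not normalized. -/
def symX (u v : Fin 2 → ℂ) (p q r t : ℝ) : Matrix (Fin 2 → Fin 2) (Fin 2 → Fin 2) ℂ :=
  p • ketBra (u ⊗ u) (u ⊗ u) + q • ketBra (v ⊗ v) (v ⊗ v) +
    r • ketBra (u ⊗ v + v ⊗ u) (u ⊗ v + v ⊗ u) +
    t • (ketBra (u ⊗ u) (v ⊗ v) + ketBra (v ⊗ v) (u ⊗ u))

lemma symX_add (u v : Fin 2 → ℂ) (p q r t p' q' r' t' : ℝ) :
    symX u v p q r t + symX u v p' q' r' t' =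
      symX u v (p + p') (q + q') (r + r') (t + t') := by
  simp only [symX, add_smul]
  abel

lemma smul_symX (u v : Fin 2 → ℂ) (c p q r t : ℝ) :
    c • symX u v p q r t = symX u v (c * p) (c * q) (c * r) (c * t) := by
  simp only [symX, smul_add, smul_smul]

lemma symX_smul_right (u v : Fin 2 → ℂ) (k p q r t : ℝ) :
    symX u (k • v) p q r t = symX u v p (k ^ 4 * q) (k ^ 2 * r) (k ^ 2 * t) := by
  ext x y
  simp only [symX, tensor, ketBra_apply, Matrix.add_apply, Matrix.smul_apply, Pi.add_apply,
    Pi.smul_apply, star_add, star_mul', Complex.real_smul, Complex.star_def, Complex.conj_ofReal]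
  push_cast
  ring

lemma sepAcross_symX_one_one_one (u w : Fin 2 → ℂ) {t : ℝ} (ht : |t| ≤ 1) :
    SepAcross {0} (symX u w 1 1 1 t) := by
  obtain ⟨ht₁, ht₂⟩ := abs_le.1 ht
  convert ((sepAcross_ketBra_add_tensor u w).smul (c := (1 + t) / 2) (by linarith)).add
    ((sepAcross_ketBra_sub_tensor u w).smul (c := (1 - t) / 2) (by linarith)) using 1
  ext x y
  simp only [symX, ketBra_apply, Matrix.add_apply, Matrix.smul_apply, Pi.add_apply, Pi.sub_apply,
    star_add, star_sub, Complex.real_smul]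
  push_cast
  ring

-- With `k² = r / p`, replacing `v` by `k v` in `p • symX u v 1 1 1 (t / r)` yields the prescribed
-- `p`, `r` and `t`, and `r² / p ≤ q` in place of `q`.
lemma sepAcross_symX (u v : Fin 2 → ℂ) {p q r t : ℝ} (hp : 0 ≤ p) (hq : 0 ≤ q) (ht : |t| ≤ r)
    (hpq : r ^ 2 ≤ p * q) : SepAcross {0} (symX u v p q r t) := by
  have hvv {c : ℝ} (hc : 0 ≤ c) : SepAcross {0} (c • ketBra (v ⊗ v) (v ⊗ v)) :=
    (sepAcross_ketBra_tensor v v).smul hc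
  rcases ((abs_nonneg t).trans ht).eq_or_lt with rfl | hr
  · obtain rfl : t = 0 := abs_nonpos_iff.1 ht
    simpa [symX] using ((sepAcross_ketBra_tensor u u).smul hp).add (hvv hq)
  have hp : 0 < p := hp.lt_of_ne' fun h => by
    rw [h, zero_mul] at hpq
    exact hpq.not_gt (pow_pos hr 2)
  have hk : √(r / p) ^ 2 = r / p := Real.sq_sqrt (by positivity)
  have hrest : 0 ≤ q - r ^ 2 / p := sub_nonneg.2 ((div_le_iff₀' hp).2 hpq)
  have htr : |t / r| ≤ 1 := by rwa [abs_div, abs_of_pos hr, div_le_one hr]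
  have hscaled : p • symX u (√(r / p) • v) 1 1 1 (t / r) = symX u v p (r ^ 2 / p) r t := by
    rw [symX_smul_right, smul_symX, show √(r / p) ^ 4 = (√(r / p) ^ 2) ^ 2 by ring, hk]
    congr 1 <;> field_simp
  have hsplit : symX u v p q r t =
      p • symX u (√(r / p) • v) 1 1 1 (t / r) + (q - r ^ 2 / p) • ketBra (v ⊗ v) (v ⊗ v) := by
    rw [hscaled]
    simp only [symX, sub_smul]
    abel
  rw [hsplit]
  exact ((sepAcross_symX_one_one_one u _ htr).smul hp.le).add (hvv hrest)

lemma exists_unitary_eq_smul_tensor_add_smul_tensor {ψ : (Fin 2 → Fin 2) → ℂ}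
    (hψ : IsPermInvariant ψ) :
    ∃ U ∈ unitaryGroup (Fin 2) ℂ, ∃ a b : ℝ,
      ψ = a • U.col 0 ⊗ U.col 0 + b • U.col 1 ⊗ U.col 1 := by
  have hS : (of fun i j => ψ ![i, j]).IsSymm := by
    ext i j
    simpa using hψ (Equiv.swap 0 1) ![i, j]
  obtain ⟨U, hU, s, -, hs⟩ := exists_unitary_eq_mul_diagonal_mul_transpose hS
  refine ⟨U, hU, s 0, s 1, funext fun x => ?_⟩
  have hx : ψ x = (U * diagonal (fun i => (s i : ℂ)) * Uᵀ) (x 0) (x 1) := by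
    rw [← hs, of_apply]
    exact congrArg ψ (FinVec.etaExpand_eq x).symm
  rw [hx, mul_apply]
  simp only [mul_diagonal, transpose_apply, Fin.sum_univ_two, tensor, col_apply, Pi.add_apply,
    Pi.smul_apply, Complex.real_smul]
  ring

lemma trace_ketBra_smul_tensor_add_smul_tensor {U : Matrix (Fin 2) (Fin 2) ℂ}
    (hU : U ∈ unitaryGroup (Fin 2) ℂ) (a b : ℝ) :
    (ketBra (a • U.col 0 ⊗ U.col 0 + b • U.col 1 ⊗ U.col 1)
      (a • U.col 0 ⊗ U.col 0 + b • U.col 1 ⊗ U.col 1)).trace = ((a ^ 2 + b ^ 2 : ℝ) : ℂ) := by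
  have horth (i j : Fin 2) : star (U.col i) ⬝ᵥ U.col j = (1 : Matrix _ _ ℂ) i j := by
    rw [← mem_unitaryGroup_iff'.1 hU]
    rfl
  rw [ketBra, trace_vecMulVec, dotProduct_comm]
  simp only [star_add, star_smul, star_trivial, add_dotProduct, dotProduct_add, smul_dotProduct,
    dotProduct_smul, star_tensor_dotProduct_tensor, horth, Complex.real_smul]
  simp [pow_two]

lemma ketBra_smul_tensor_add_smul_tensor (u v : Fin 2 → ℂ) (a b : ℝ) :
    ketBra (a • u ⊗ u + b • v ⊗ v) (a • u ⊗ u + b • v ⊗ v) =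
      symX u v (a ^ 2) (b ^ 2) 0 (a * b) := by
  ext x y
  simp only [symX, ketBra_apply, Matrix.add_apply, Matrix.smul_apply, Pi.add_apply, Pi.smul_apply,
    star_add, star_mul', Complex.real_smul, Complex.star_def, Complex.conj_ofReal]
  push_cast
  ring

lemma symProj_two_eq_symX {U : Matrix (Fin 2) (Fin 2) ℂ} (hU : U ∈ unitaryGroup (Fin 2) ℂ) :
    symProj 2 = symX (U.col 0) (U.col 1) 1 1 2⁻¹ 0 := by
  ext x y
  rw [symProj_two_apply, ← mem_unitaryGroup_iff.1 hU]
  simp only [symX, ketBra_apply, tensor, mul_apply, Fin.sum_univ_two, star_apply, col_apply,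
    Matrix.add_apply, Matrix.smul_apply, Pi.add_apply, star_add, star_mul', Complex.real_smul]
  push_cast
  ring

lemma sepAcross_smul_symProj_add_smul_ketBra {ψ : (Fin 2 → Fin 2) → ℂ} (hψ : IsPermInvariant ψ)
    {α : ℝ} (hα₁ : -(3 / 4) ≤ α) (hα₂ : α ≤ 1) :
    SepAcross {0} ((ketBra ψ ψ).trace • symProj 2 + α • ketBra ψ ψ) := by
  obtain ⟨U, hU, a, b, rfl⟩ := exists_unitary_eq_smul_tensor_add_smul_tensor hψ
  rw [trace_ketBra_smul_tensor_add_smul_tensor hU, Complex.coe_smul, symProj_two_eq_symX hU,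
    ketBra_smul_tensor_add_smul_tensor, smul_symX, smul_symX, symX_add]
  obtain ⟨n, hn⟩ : ∃ n, n = a ^ 2 + b ^ 2 := ⟨_, rfl⟩
  have hab : |a * b| ≤ n / 2 :=
    abs_le.2 ⟨by nlinarith [sq_nonneg (a + b)], by nlinarith [sq_nonneg (a - b)]⟩
  have hα : |α| ≤ 1 := abs_le.2 ⟨by linarith, hα₂⟩
  have ht : |α * (a * b)| ≤ n / 2 := by
    rw [abs_mul]
    exact (mul_le_of_le_one_left (abs_nonneg _) hα).trans hab
  have hpq : (n / 2) ^ 2 ≤ (n + α * a ^ 2) * (n + α * b ^ 2) :=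
    calc
      (n / 2) ^ 2 = 1 / 4 * n ^ 2 := by ring
      _ ≤ (1 + α) * n ^ 2 + (α * (a * b)) ^ 2 :=
        le_add_of_le_of_nonneg (by gcongr; linarith) (sq_nonneg _)
      _ = (n + α * a ^ 2) * (n + α * b ^ 2) := by rw [hn]; ring
  rw [← hn]
  convert sepAcross_symX (U.col 0) (U.col 1) (p := n + α * a ^ 2) (q := n + α * b ^ 2)
    (by nlinarith [sq_nonneg a, sq_nonneg b]) (by nlinarith [sq_nonneg a, sq_nonneg b]) ht hpq
    using 2 <;> ring

end TwoQubits

/-- Reduction map on the two-qubit symmetric subspace: separability for `-3/4 ≤ α ≤ 1`. -/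
theorem stmt3 (ρ : Matrix (Fin 2 → Fin 2) (Fin 2 → Fin 2) ℂ) (hρ : ρ.PosSemidef)
    (hsupp : symProj 2 * ρ * symProj 2 = ρ)
    (α : ℝ) (hα1 : -(3 / 4 : ℝ) ≤ α) (hα2 : α ≤ 1) :
    SepAcross {0} (ρ.trace • symProj 2 + (α : ℂ) • ρ) := by
  obtain ⟨m, ψ, hψ, rfl⟩ := exists_eq_sum_ketBra_isPermInvariant hρ hsupp
  rw [Matrix.trace_sum, Finset.sum_smul, Finset.smul_sum, ← Finset.sum_add_distrib]
  exact .sum fun k _ => sepAcross_smul_symProj_add_smul_ketBra (hψ k) hα1 hα2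
end
end

section
/- Let N = 3 and let ρ be a positive semidefinite 3-qubit operator supported on the symmetric subspace, i.e. 𝟙_S · ρ · 𝟙_S = ρ. Then for every real α with −1/3 ≤ α ≤ 2/3, the matrix σ = Tr(ρ)·𝟙_S + α·ρ is fully separable. -/
open scoped ComplexOrder

noncomputable section

/-!
The operator `Tr(ρ) 𝟙_S + α ρ` lives on the symmetric subspace, so it is recorded by the `4 × 4`
matrix of its entries at the Hamming weights. Its partial transpose on one qubit is non-negative:
that of `𝟙_S` is at least `1 / 3`, while that of a pure state has spectrum in `[-1 / 2, 1]`.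

A symmetric three-qubit state `σ` with positive definite partial transpose is separable. Otherwise a
point `p` of the separable set with positive definite partial transpose is supported by a
functional, that is, by a non-zero form `f ≥ 0` of bidegree `(3, 3)` in a qubit vector and its
conjugate, which vanishes on the product vectors `v_k` of a decomposition of `p`. The zeros of such
an `f` lie among those of a non-zero form `q` of bidegree `(2, 1)`, and then the expectation of the
partial transpose of `p` at `q`, which is the sum of the `|q(v_k)|²`, is zero: a contradiction.
-/

open scoped ComplexConjugate Polynomial
open Complex Filter Topology

/-! ### Real quartics on the plane -/

lemma eq_zero_of_eventually_mul_nonneg {g : ℝ → ℝ} (hg : ContinuousAt g 0)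
    (h : ∀ᶠ t in 𝓝 0, 0 ≤ t * g t) : g 0 = 0 := by
  refine le_antisymm ?_ ?_
  · refine le_of_tendsto (hg.tendsto.mono_left nhdsWithin_le_nhds : Tendsto g (𝓝[<] 0) _) ?_
    filter_upwards [h.filter_mono nhdsWithin_le_nhds, self_mem_nhdsWithin] with t ht hneg
    exact nonpos_of_mul_nonneg_right ht hneg
  · refine ge_of_tendsto (hg.tendsto.mono_left nhdsWithin_le_nhds : Tendsto g (𝓝[>] 0) _) ?_
    filter_upwards [h.filter_mono nhdsWithin_le_nhds, self_mem_nhdsWithin] with t ht hpos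
    exact nonneg_of_mul_nonneg_right ht hpos

/-- The real quadratic form `A |z|² + 2 Re (B z²)` on the plane. -/
def realQuadratic (A : ℝ) (B z : ℂ) : ℝ := A * normSq z + 2 * (B * z ^ 2).re

/-- The real cubic form `Re (C z³) + |z|² Re (D z)` on the plane. -/
def realCubic (C D z : ℂ) : ℝ := (C * z ^ 3).re + normSq z * (D * z).re

/-- The general real function on the plane that is a combination of the `zⁱ z̄ʲ` with `i, j ≤ 3`
and vanishes to second order at `0` and at infinity: this is what remains of a nonnegative biform
of bidegree `(3, 3)` with zeros at `(1, 0)` and `(0, 1)`. -/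
def quartic (A F : ℝ) (B C D E z : ℂ) : ℝ :=
  normSq z * realQuadratic A B z + 2 * realCubic C D z + realQuadratic F E z

/-- The combination of `z²`, `z z̄`, `z`, `z̄` with coefficients `k`: a biform of bidegree `(2, 1)`
vanishing at `0` and at infinity, in the affine coordinate `z`. -/
def conic (k : Fin 4 → ℂ) (z : ℂ) : ℂ :=
  k 0 * z ^ 2 + k 1 * (z * conj z) + k 2 * z + k 3 * conj z

/-- The zeros of `f` all lie on the zero set of one nonzero `conic`. -/
def ZerosOnConic (f : ℂ → ℝ) : Prop :=
  ∃ k : Fin 4 → ℂ, k ≠ 0 ∧ ∀ z, f z = 0 → conic k z = 0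

lemma ZerosOnConic.of_comp_mul {f : ℂ → ℝ} {c : ℂ} (hc : c ≠ 0)
    (h : ZerosOnConic fun z => f (c * z)) : ZerosOnConic f := by
  obtain ⟨k, hk, hz⟩ := h
  have hc' : conj c ≠ 0 := (map_ne_zero _).2 hc
  refine ⟨![k 0 / c ^ 2, k 1 / (c * conj c), k 2 / c, k 3 / conj c], ?_, fun z hfz => ?_⟩
  · contrapose! hk
    ext i
    have := congrFun hk i
    fin_cases i <;> simpa [hc] using this
  · have := hz (z / c) (by simpa only [mul_div_cancel₀ _ hc])
    simp only [conic, map_div₀] at this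
    rw [← this]
    simp only [conic, Matrix.cons_val]
    field_simp

section Quartic

variable {A F : ℝ} {B C D E : ℂ}

lemma quartic_mul (c z : ℂ) :
    quartic A F B C D E (c * z) = quartic (A * normSq c ^ 2) (F * normSq c) (B * c ^ 2 * normSq c)
      (C * c ^ 3) (D * c * normSq c) (E * c ^ 2) z := by
  simp only [quartic, realQuadratic, realCubic, map_mul, mul_pow, ← mul_assoc,
    re_mul_ofReal, mul_right_comm _ (normSq c : ℂ)]
  ring

lemma quartic_ofReal_mul (t : ℝ) (z : ℂ) :
    quartic A F B C D E (t * z) = t ^ 2 * (normSq z * realQuadratic A B z * (t * t)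
      + 2 * realCubic C D z * t + realQuadratic F E z) := by
  simp only [quartic, realQuadratic, realCubic, mul_pow, mul_left_comm _ (t : ℂ), ← ofReal_pow,
    mul_left_comm _ ((t ^ _ : ℝ) : ℂ), re_ofReal_mul, map_mul, normSq_ofReal]
  ring

lemma radial_nonneg (h : ∀ z, 0 ≤ quartic A F B C D E z) (z : ℂ) (t : ℝ) :
    0 ≤ normSq z * realQuadratic A B z * (t * t) + 2 * realCubic C D z * t
      + realQuadratic F E z := by
  have hclosed : IsClosed {t : ℝ | 0 ≤ normSq z * realQuadratic A B z * (t * t)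
      + 2 * realCubic C D z * t + realQuadratic F E z} :=
    isClosed_le continuous_const (by fun_prop)
  refine hclosed.closure_subset_iff.2 (fun s (hs : s ≠ 0) => ?_) (dense_compl_singleton (0 : ℝ) t)
  exact nonneg_of_mul_nonneg_right (quartic_ofReal_mul s z ▸ h (s * z)) (by positivity)

lemma realCubic_sq_le (h : ∀ z, 0 ≤ quartic A F B C D E z) (z : ℂ) :
    realCubic C D z ^ 2 ≤ normSq z * realQuadratic A B z * realQuadratic F E z := by
  have := discrim_le_zero (radial_nonneg h z)
  rw [discrim] at this
  linarith

lemma realQuadratic_nonneg_right (h : ∀ z, 0 ≤ quartic A F B C D E z) (z : ℂ) :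
    0 ≤ realQuadratic F E z := by
  simpa using radial_nonneg h z 0

lemma realQuadratic_nonneg_left (h : ∀ z, 0 ≤ quartic A F B C D E z) (z : ℂ) :
    0 ≤ realQuadratic A B z := by
  rcases eq_or_ne z 0 with rfl | hz
  · simp [realQuadratic]
  refine nonneg_of_mul_nonneg_right ?_ (normSq_pos.2 hz)
  have hsq := realCubic_sq_le h z
  rcases (realQuadratic_nonneg_right h z).eq_or_lt with h0 | hpos
  · have hβ : realCubic C D z = 0 := by
      rw [← h0, mul_zero] at hsq
      exact pow_eq_zero_iff two_ne_zero |>.1 (hsq.antisymm (sq_nonneg _))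
    simpa [← h0, hβ] using radial_nonneg h z 1
  · exact nonneg_of_mul_nonneg_left ((sq_nonneg _).trans hsq) hpos

lemma realCubic_sq_eq (h : ∀ z, 0 ≤ quartic A F B C D E z) {z : ℂ}
    (hz : quartic A F B C D E z = 0) :
    realCubic C D z ^ 2 = normSq z * realQuadratic A B z * realQuadratic F E z := by
  refine (realCubic_sq_le h z).antisymm ?_
  have hβ : realCubic C D z = -(normSq z * realQuadratic A B z + realQuadratic F E z) / 2 := by
    rw [quartic] at hz
    linarith
  rw [hβ]
  linarith [sq_nonneg (normSq z * realQuadratic A B z - realQuadratic F E z)]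

/-! ### Two zeros on a line through the origin -/

lemma realQuadratic_eq_of_nonneg (h : ∀ z, 0 ≤ realQuadratic A B z)
    (h1 : realQuadratic A B 1 = 0) : B = -(A / 2 : ℝ) := by
  have hre : A + 2 * B.re = 0 := by simpa [realQuadratic] using h1
  have him : -4 * B.im + 0 * (A - 2 * B.re) = 0 := by
    refine eq_zero_of_eventually_mul_nonneg (g := fun t => -4 * B.im + t * (A - 2 * B.re))
      (by fun_prop) (.of_forall fun t => ?_)
    have ht := h (1 + t * I)
    have : realQuadratic A B (1 + t * I)
        = (A + 2 * B.re) + t * (-4 * B.im + t * (A - 2 * B.re)) := by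
      simp only [realQuadratic, normSq_apply, add_re, one_re, mul_re, ofReal_re, I_re, ofReal_im,
        I_im, add_im, one_im, mul_im, pow_two]
      ring
    rwa [this, hre, zero_add] at ht
  apply Complex.ext <;> simp only [neg_re, neg_im, ofReal_re, ofReal_im] <;> linarith

lemma realCubic_eq_of_nonneg (h : ∀ z, 0 ≤ quartic A F (-(A / 2 : ℝ)) C D (-(F / 2 : ℝ)) z)
    (h1 : realCubic C D 1 = 0) : D = -C.re - 3 * C.im * I := by
  have hre : C.re + D.re = 0 := by simpa [realCubic] using h1
  have hexp (t : ℝ) : quartic A F (-(A / 2 : ℝ)) C D (-(F / 2 : ℝ)) (1 + t * I)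
      = 2 * (C.re + D.re) + t * (-2 * (3 * C.im + D.im) + t * (2 * A * (1 + t ^ 2) + 2 * F
        - 6 * C.re + 2 * t * C.im + 2 * D.re - 2 * t * D.im)) := by
    simp only [quartic, realQuadratic, realCubic, normSq_apply, pow_succ, pow_zero, add_re, one_re,
      mul_re, ofReal_re, I_re, ofReal_im, I_im, add_im, one_im, mul_im, neg_re, neg_im]
    ring
  have him : -2 * (3 * C.im + D.im) + 0 * (2 * A * (1 + 0 ^ 2) + 2 * F
        - 6 * C.re + 2 * 0 * C.im + 2 * D.re - 2 * 0 * D.im) = 0 := by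
    refine eq_zero_of_eventually_mul_nonneg (g := fun t => -2 * (3 * C.im + D.im)
      + t * (2 * A * (1 + t ^ 2) + 2 * F - 6 * C.re + 2 * t * C.im + 2 * D.re - 2 * t * D.im))
      (by fun_prop) (.of_forall fun t => ?_)
    have ht := h (1 + t * I)
    rwa [hexp, hre, mul_zero, zero_add] at ht
  apply Complex.ext <;> simp only [sub_re, sub_im, neg_re, neg_im, mul_re, mul_im, ofReal_re,
    ofReal_im, re_ofNat, im_ofNat, I_re, I_im] <;> linarith

lemma quartic_eq_im_sq_mul (z : ℂ) :
    quartic A F (-(A / 2 : ℝ)) C (-C.re - 3 * C.im * I) (-(F / 2 : ℝ)) z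
      = 2 * z.im ^ 2 * (A * normSq z - 4 * (C * z).re + F) := by
  simp only [quartic, realQuadratic, realCubic, normSq_apply, pow_succ, pow_zero, mul_re, mul_im,
    one_re, one_im, neg_re, neg_im, sub_re, sub_im, ofReal_re, ofReal_im, I_re, I_im, re_ofNat,
    im_ofNat]
  ring

lemma gradient_eq_zero (h : ∀ z : ℂ, z.im ≠ 0 → 0 ≤ A * normSq z - 4 * (C * z).re + F) {z : ℂ}
    (him : z.im ≠ 0) (hz : A * normSq z - 4 * (C * z).re + F = 0) : A * z - 2 * conj C = 0 := by
  set l : ℂ := A * z - 2 * conj C with hl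
  have hexp (t : ℝ) : A * normSq (z - t * l) - 4 * (C * (z - t * l)).re + F
      = (A * normSq z - 4 * (C * z).re + F) + t * (normSq l * (A * t - 2)) := by
    simp only [hl, normSq_apply, sub_re, sub_im, mul_re, mul_im, ofReal_re, ofReal_im, re_ofNat,
      im_ofNat, conj_re, conj_im]
    ring
  have him' : ∀ᶠ t : ℝ in 𝓝 0, (z - t * l).im ≠ 0 :=
    ContinuousAt.eventually_ne (by fun_prop) (by simpa using him)
  have : normSq l * (A * 0 - 2) = 0 := by
    refine eq_zero_of_eventually_mul_nonneg (g := fun t => normSq l * (A * t - 2))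
      (by fun_prop) (him'.mono fun t ht => ?_)
    have := h _ ht
    rwa [hexp, hz, zero_add] at this
  exact normSq_eq_zero.1 (by linarith)

lemma zerosOnConic_of_im_sq (h : ∀ z : ℂ, z.im ≠ 0 → 0 ≤ A * normSq z - 4 * (C * z).re + F)
    (hne : ¬(A = 0 ∧ C = 0 ∧ F = 0)) :
    ZerosOnConic fun z => 2 * z.im ^ 2 * (A * normSq z - 4 * (C * z).re + F) := by
  by_cases hAC : A = 0 ∧ C = 0
  · obtain ⟨rfl, rfl⟩ := hAC
    refine ⟨![0, 0, 1, -1], fun h0 => one_ne_zero (congrFun h0 2), fun z hz => ?_⟩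
    have him : z.im = 0 := by simpa [show F ≠ 0 by simpa using hne] using hz
    simp [conic, conj_eq_iff_im.2 him]
  · refine ⟨![A, -A, -(2 * conj C), 2 * conj C], fun h0 => hAC ?_, fun z hz => ?_⟩
    · exact ⟨by simpa using congrFun h0 0, by simpa using congrFun h0 3⟩
    · have hfac : conic ![A, -A, -(2 * conj C), 2 * conj C] z
          = (z - conj z) * (A * z - 2 * conj C) := by
        simp only [conic, Matrix.cons_val]
        ring
      rw [hfac]
      by_cases him : z.im = 0
      · rw [conj_eq_iff_im.2 him, sub_self, zero_mul]
      · rw [gradient_eq_zero h him (by simpa [him] using hz), mul_zero]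

lemma zerosOnConic_of_zero_one_real (h : ∀ z, 0 ≤ quartic A F B C D E z)
    (hne : quartic A F B C D E ≠ 0) {t : ℝ} (ht : t ≠ 0) (ht1 : t ≠ 1)
    (h1 : quartic A F B C D E 1 = 0) (h2 : quartic A F B C D E t = 0) :
    ZerosOnConic (quartic A F B C D E) := by
  have hsq := realCubic_sq_eq h h1
  rw [← mul_one (t : ℂ), quartic_ofReal_mul, mul_eq_zero_iff_left (pow_ne_zero 2 ht)] at h2
  rw [quartic] at h1
  simp only [map_one, one_mul] at h1 h2 hsq
  have hβ : realCubic C D 1 = -realQuadratic A B 1 := by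
    refine eq_neg_of_add_eq_zero_left ((pow_eq_zero_iff two_ne_zero).1 ?_)
    linear_combination hsq + realQuadratic A B 1 * h1
  have hγ : realQuadratic F E 1 = realQuadratic A B 1 := by linarith
  have hα : realQuadratic A B 1 = 0 := by
    rw [hβ, hγ] at h2
    have : realQuadratic A B 1 * (t - 1) ^ 2 = 0 := by linarith
    exact (mul_eq_zero_iff_right (pow_ne_zero 2 (sub_ne_zero.2 ht1))).1 this
  obtain rfl := realQuadratic_eq_of_nonneg (realQuadratic_nonneg_left h) hα
  obtain rfl := realQuadratic_eq_of_nonneg (realQuadratic_nonneg_right h) (hγ.trans hα)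
  obtain rfl := realCubic_eq_of_nonneg h (by rw [hβ, hα, neg_zero])
  have heq := funext fun z => quartic_eq_im_sq_mul (A := A) (F := F) (C := C) z
  rw [heq] at hne ⊢
  refine zerosOnConic_of_im_sq (fun z hz => ?_) fun h0 => hne ?_
  · exact nonneg_of_mul_nonneg_right (quartic_eq_im_sq_mul z ▸ h z) (by positivity)
  · ext z
    simp [h0]

lemma zerosOnConic_of_collinear_zeros (h : ∀ z, 0 ≤ quartic A F B C D E z)
    (hne : quartic A F B C D E ≠ 0) {ζ : ℂ} (hζ : ζ ≠ 0) {t : ℝ} (ht : t ≠ 0) (ht1 : t ≠ 1)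
    (h1 : quartic A F B C D E ζ = 0) (h2 : quartic A F B C D E (t * ζ) = 0) :
    ZerosOnConic (quartic A F B C D E) := by
  refine .of_comp_mul hζ ?_
  have hmul := quartic_mul (A := A) (F := F) (B := B) (C := C) (D := D) (E := E) ζ
  simp_rw [hmul]
  refine zerosOnConic_of_zero_one_real (fun z => hmul z ▸ h _) (fun h0 => hne ?_) ht ht1 ?_ ?_
  · ext z
    rw [← mul_div_cancel₀ z hζ, hmul, h0]
    rfl
  · rw [← hmul, mul_one, h1]
  · rw [← hmul, mul_comm, h2]

end Quartic

/-! ### Zeros on lines in at least four directions -/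

lemma deriv_eq_zero_of_nonneg {f : ℝ → ℂ} {f' : ℂ} {x : ℝ} (hf : HasDerivAt f f' x)
    (h : ∀ y, 0 ≤ f y) (hx : f x = 0) : f' = 0 := by
  have hre : HasDerivAt (fun y => (f y).re) f'.re x := reCLM.hasFDerivAt.comp_hasDerivAt x hf
  have him : HasDerivAt (fun y => (f y).im) f'.im x := imCLM.hasFDerivAt.comp_hasDerivAt x hf
  have hmin : IsLocalMin (fun y => (f y).re) x :=
    .of_forall fun y => by simpa [hx] using (nonneg_iff.1 (h y)).1
  have hconst : (fun y => (f y).im) = fun _ => 0 := funext fun y => (nonneg_iff.1 (h y)).2.symm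
  rw [hconst] at him
  exact Complex.ext (hmin.hasDerivAt_eq_zero hre) (him.unique (hasDerivAt_const x 0))

lemma isRoot_derivative_of_nonneg_on_circle {P : ℂ[X]} {n : ℕ}
    (h : ∀ s, ‖s‖ = 1 → 0 ≤ conj s ^ n * P.eval s) {s : ℂ} (hs : ‖s‖ = 1) (hroot : P.IsRoot s) :
    P.derivative.IsRoot s := by
  have hcurve : HasDerivAt (fun θ : ℝ => s * cexp (θ * I)) (s * I) 0 := by
    simpa using (((hasDerivAt_id (0 : ℝ)).ofReal_comp.mul_const I).cexp.const_mul s)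
  have hP : HasDerivAt (fun θ : ℝ => P.eval (s * cexp (θ * I))) (P.derivative.eval s * (s * I)) 0 :=
    HasDerivAt.comp_of_eq (0 : ℝ) (P.hasDerivAt s) hcurve (by simp)
  have hconj : HasDerivAt (fun θ : ℝ => conj (s * cexp (θ * I)) ^ n) _ 0 :=
    (hcurve.star).pow n
  have := deriv_eq_zero_of_nonneg (hconj.mul hP)
    (fun θ => h _ (by simp [hs, norm_exp_ofReal_mul_I])) (by simp [hroot.eq_zero])
  have hs0 : s ≠ 0 := norm_ne_zero_iff.1 (hs ▸ one_ne_zero)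
  simpa [hroot.eq_zero, hs0] using this

lemma eq_zero_of_nonneg_on_circle {P : ℂ[X]} {n : ℕ} (hdeg : P.natDegree ≤ 2 * n)
    (h : ∀ s, ‖s‖ = 1 → 0 ≤ conj s ^ n * P.eval s) {S : Finset ℂ} (hcard : n < S.card)
    (hS : ∀ s ∈ S, ‖s‖ = 1 ∧ P.IsRoot s) : P = 0 := by
  by_contra hP
  have hle : 2 • S.val ≤ P.roots := Multiset.le_iff_count.2 fun s => by
    rw [Multiset.count_nsmul, Polynomial.count_roots]
    by_cases hs : s ∈ S
    · rw [Multiset.count_eq_one_of_mem S.nodup hs]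
      exact (Polynomial.one_lt_rootMultiplicity_iff_isRoot hP).2
        ⟨(hS s hs).2, isRoot_derivative_of_nonneg_on_circle h (hS s hs).1 (hS s hs).2⟩
    · rw [Multiset.count_eq_zero_of_notMem hs]
      exact Nat.zero_le _
  have hcount := (Multiset.card_le_card hle).trans P.card_roots'
  rw [Multiset.card_nsmul, Finset.card_val] at hcount
  omega

section Discriminant

variable {A F : ℝ} {B C D E : ℂ}

/-- The polynomial with `z̄⁶ P(z / z̄) = |z|² α(z) γ(z) - β(z)²` for the forms `α`, `β`, `γ` that
make up `quartic A F B C D E`, that is, their radial discriminant as a function of the direction. -/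
def directionPoly (A F : ℝ) (B C D E : ℂ) : ℂ[X] :=
  .X * ((.C B * .X ^ 2 + .C (A : ℂ) * .X + .C (conj B))
    * (.C E * .X ^ 2 + .C (F : ℂ) * .X + .C (conj E)))
  - .C (1 / 4) * (.C C * .X ^ 3 + .C D * .X ^ 2 + .C (conj D) * .X + .C (conj C)) ^ 2

lemma natDegree_directionPoly_le : (directionPoly A F B C D E).natDegree ≤ 2 * 3 := by
  unfold directionPoly
  compute_degree

lemma conj_pow_mul_eval_directionPoly {z : ℂ} (hz : z ≠ 0) :
    conj z ^ 6 * (directionPoly A F B C D E).eval (z / conj z) =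
      (normSq z * realQuadratic A B z * realQuadratic F E z - realCubic C D z ^ 2 : ℝ) := by
  have hz' : conj z ≠ 0 := (map_ne_zero _).2 hz
  simp only [directionPoly, realQuadratic, realCubic, ofReal_sub, ofReal_mul, ofReal_pow,
    ofReal_add, re_eq_add_conj, map_mul, map_pow, Polynomial.eval_add, Polynomial.eval_sub,
    Polynomial.eval_mul, Polynomial.eval_pow, Polynomial.eval_C, Polynomial.eval_X,
    ← mul_conj z, ofReal_ofNat]
  field_simp
  ring

lemma coeffs_of_directionPoly_eq_zero (h : directionPoly A F B C D E = 0) : C = 0 ∧ B * E = 0 := by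
  have h6 : (directionPoly A F B C D E).coeff 6 = -(1 / 4 * C ^ 2) := by
    unfold directionPoly
    compute_degree!
  obtain rfl : C = 0 := by simpa [h] using h6
  have h5 : (directionPoly A F B 0 D E).coeff 5 = B * E := by
    unfold directionPoly
    simp only [map_zero, zero_mul, zero_add, add_zero]
    compute_degree!
  exact ⟨rfl, by rw [← h5, h, Polynomial.coeff_zero]⟩

lemma directionPoly_eq_zero (h : ∀ z, 0 ≤ quartic A F B C D E z) {S : Finset ℂ}
    (hcard : 3 < S.card) (hS : ∀ s ∈ S, ∃ z, z ≠ 0 ∧ z / conj z = s ∧ quartic A F B C D E z = 0) :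
    directionPoly A F B C D E = 0 := by
  refine eq_zero_of_nonneg_on_circle natDegree_directionPoly_le (fun s hs => ?_) hcard
    fun s hs => ?_
  · obtain ⟨u, rfl⟩ := IsAlgClosed.exists_pow_nat_eq s two_pos
    have hu : ‖u‖ = 1 := by
      rwa [norm_pow, pow_eq_one_iff_of_nonneg (norm_nonneg u) two_ne_zero] at hs
    have hdir : u / conj u = u ^ 2 := by
      rw [← inv_eq_conj hu, div_inv_eq_mul, sq]
    have := conj_pow_mul_eval_directionPoly (A := A) (F := F) (B := B) (C := C) (D := D) (E := E)
      (norm_ne_zero_iff.1 (hu ▸ one_ne_zero) : u ≠ 0)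
    rw [hdir] at this
    rw [map_pow, ← pow_mul]
    exact (zero_le_real.2 (sub_nonneg.2 (realCubic_sq_le h u))).trans_eq this.symm
  · obtain ⟨z, hz, rfl, hzero⟩ := hS s hs
    have hz' : conj z ≠ 0 := (map_ne_zero _).2 hz
    refine ⟨by simp [hz], ?_⟩
    have := conj_pow_mul_eval_directionPoly (A := A) (F := F) (B := B) (C := C) (D := D) (E := E) hz
    rw [realCubic_sq_eq h hzero, sub_self, ofReal_zero] at this
    exact (mul_eq_zero_iff_left (pow_ne_zero 6 hz')).1 this

lemma normSq_mul_re_sq (h : directionPoly A F B 0 D E = 0) (z : ℂ) :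
    normSq z * (D * z).re ^ 2 = realQuadratic A B z * realQuadratic F E z := by
  rcases eq_or_ne z 0 with rfl | hz
  · simp [realQuadratic]
  have := conj_pow_mul_eval_directionPoly (A := A) (F := F) (B := B) (C := 0) (D := D) (E := E) hz
  rw [h, Polynomial.eval_zero, mul_zero, eq_comm, ofReal_eq_zero, sub_eq_zero, realCubic,
    zero_mul, zero_re, zero_add, mul_pow, sq (normSq z), mul_assoc, mul_assoc] at this
  exact (mul_left_cancel₀ (normSq_pos.2 hz).ne' this).symm

lemma eq_zero_of_forall_re_mul_eq_zero (h : ∀ z, (D * z).re = 0) : D = 0 := by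
  simpa [mul_conj] using h (conj D)

lemma zerosOnConic_of_left_degenerate (h : ∀ z, 0 ≤ quartic A F 0 0 D E z)
    (hne : quartic A F 0 0 D E ≠ 0) (hP : directionPoly A F 0 0 D E = 0) {ζ : ℂ} (hζ : ζ ≠ 0)
    (hzero : quartic A F 0 0 D E ζ = 0) : ZerosOnConic (quartic A F 0 0 D E) := by
  have hsq (z : ℂ) : (D * z).re ^ 2 = A * realQuadratic F E z := by
    rcases eq_or_ne z 0 with rfl | hz
    · simp [realQuadratic]
    have := normSq_mul_re_sq hP z
    simp only [realQuadratic, zero_mul, zero_re, mul_zero, add_zero] at this ⊢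
    exact mul_left_cancel₀ (normSq_pos.2 hz).ne' (by linear_combination this)
  rcases eq_or_ne A 0 with rfl | hA
  · obtain rfl : D = 0 := eq_zero_of_forall_re_mul_eq_zero fun z => by simpa using hsq z
    refine zerosOnConic_of_collinear_zeros h hne hζ two_ne_zero (by norm_num) hzero ?_
    rw [quartic_ofReal_mul]
    simpa [quartic, realQuadratic, realCubic] using hzero
  · refine ⟨![0, A, D / 2, conj D / 2], fun h0 => hA (by simpa using congrFun h0 1), fun z hz => ?_⟩
    have hfac : (A * normSq z + (D * z).re) ^ 2 = A * quartic A F 0 0 D E z := by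
      rw [quartic, mul_add, ← hsq]
      simp only [realQuadratic, realCubic, zero_mul, zero_re]
      ring
    have hroot : A * normSq z + (D * z).re = 0 := by simpa [hz] using hfac
    rw [← ofReal_eq_zero, ofReal_add, ofReal_mul, ← mul_conj, re_eq_add_conj, map_mul] at hroot
    simp only [conic, Matrix.cons_val]
    linear_combination hroot

lemma zerosOnConic_of_right_degenerate (h : ∀ z, 0 ≤ quartic A F B 0 D 0 z)
    (hne : quartic A F B 0 D 0 ≠ 0) (hP : directionPoly A F B 0 D 0 = 0) {ζ : ℂ} (hζ : ζ ≠ 0)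
    (hzero : quartic A F B 0 D 0 ζ = 0) : ZerosOnConic (quartic A F B 0 D 0) := by
  have hsq {z : ℂ} (hz : z ≠ 0) : (D * z).re ^ 2 = F * realQuadratic A B z := by
    have := normSq_mul_re_sq hP z
    simp only [realQuadratic, zero_mul, zero_re, mul_zero, add_zero] at this ⊢
    exact mul_left_cancel₀ (normSq_pos.2 hz).ne' (by linear_combination this)
  rcases eq_or_ne F 0 with rfl | hF
  · obtain rfl : D = 0 := eq_zero_of_forall_re_mul_eq_zero fun z => by
      rcases eq_or_ne z 0 with rfl | hz
      · simp
      · simpa using hsq hz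
    refine zerosOnConic_of_collinear_zeros h hne hζ two_ne_zero (by norm_num) hzero ?_
    have hα : realQuadratic A B ζ = 0 := by
      have hγ : realQuadratic 0 0 ζ = 0 := by simp [realQuadratic]
      simpa [quartic, hγ, realCubic, hζ] using hzero
    rw [quartic_ofReal_mul, hα]
    simp [realQuadratic, realCubic]
  · refine ⟨![D / 2, conj D / 2, F, 0], fun h0 => hF (by simpa using congrFun h0 2), fun z hz => ?_⟩
    rcases eq_or_ne z 0 with rfl | hz0
    · simp [conic]
    have hfac : normSq z * ((D * z).re + F) ^ 2 = F * quartic A F B 0 D 0 z := by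
      rw [quartic, mul_add, mul_add, mul_left_comm, ← hsq hz0]
      simp only [realQuadratic, realCubic, zero_mul, zero_re]
      ring
    have hroot : (D * z).re + F = 0 := by simpa [hz, hz0] using hfac
    rw [← ofReal_eq_zero, ofReal_add, re_eq_add_conj, map_mul] at hroot
    simp only [conic, Matrix.cons_val]
    linear_combination z * hroot

lemma exists_real_mul_of_div_conj_eq {z w : ℂ} (hz : z ≠ 0) (hw : w ≠ 0)
    (h : z / conj z = w / conj w) : ∃ t : ℝ, w = t * z := by
  have hz' := (map_ne_zero conj).2 hz
  have hw' := (map_ne_zero conj).2 hw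
  have hreal : conj (w / z) = w / z := by
    rw [map_div₀, div_eq_div_iff hz' hz]
    rw [div_eq_div_iff hz' hw'] at h
    linear_combination h
  obtain ⟨t, ht⟩ := conj_eq_iff_real.1 hreal
  exact ⟨t, by rw [← ht, div_mul_cancel₀ _ hz]⟩

/-- A nonnegative `quartic` with four zeros away from the origin either has two of them on a line
through the origin, or a radial discriminant with four double zeros on the unit circle. -/
lemma zerosOnConic_of_four_zeros (h : ∀ z, 0 ≤ quartic A F B C D E z)
    (hne : quartic A F B C D E ≠ 0) {ζ : Fin 4 → ℂ} (hinj : ζ.Injective) (hζ : ∀ i, ζ i ≠ 0)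
    (hzero : ∀ i, quartic A F B C D E (ζ i) = 0) : ZerosOnConic (quartic A F B C D E) := by
  by_cases hdir : (fun i => ζ i / conj (ζ i)).Injective
  · have hP : directionPoly A F B C D E = 0 := by
      refine directionPoly_eq_zero h (S := Finset.univ.map ⟨_, hdir⟩) (by simp) fun s hs => ?_
      obtain ⟨i, -, rfl⟩ := Finset.mem_map.1 hs
      exact ⟨ζ i, hζ i, rfl, hzero i⟩
    obtain ⟨rfl, hBE⟩ := coeffs_of_directionPoly_eq_zero hP
    rcases mul_eq_zero.1 hBE with rfl | rfl
    · exact zerosOnConic_of_left_degenerate h hne hP (hζ 0) (hzero 0)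
    · exact zerosOnConic_of_right_degenerate h hne hP (hζ 0) (hzero 0)
  · obtain ⟨i, j, hij, hne_ij⟩ : ∃ i j, ζ i / conj (ζ i) = ζ j / conj (ζ j) ∧ i ≠ j := by
      simpa [Function.Injective] using hdir
    obtain ⟨t, ht⟩ := exists_real_mul_of_div_conj_eq (hζ i) (hζ j) hij
    refine zerosOnConic_of_collinear_zeros h hne (hζ i) (t := t) ?_ ?_ (hzero i) (ht ▸ hzero j)
    · rintro rfl
      exact hζ j (by simpa using ht)
    · rintro rfl
      exact hne_ij (hinj (by simpa using ht.symm))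

end Discriminant

open scoped Matrix LinearAlgebra.Projectivization

/-! ### Biforms -/

section Weight

variable {N : ℕ}

/-- The Hamming weight of a bit string, which indexes the Dicke state it contributes to. -/
def bitWeight (x : Fin N → Fin 2) : Fin (N + 1) :=
  ⟨(Finset.univ.filter fun i => x i = 1).card,
    Nat.lt_succ_of_le ((Finset.card_le_univ _).trans_eq (Fintype.card_fin N))⟩

lemma bitWeight_surjective : Function.Surjective (bitWeight (N := N)) := fun k => by
  refine ⟨fun i => if (i : ℕ) < k then 1 else 0, Fin.ext ?_⟩
  simp only [bitWeight, ite_eq_left_iff, zero_ne_one, imp_false, not_not, Fin.card_filter_val_lt]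
  exact min_eq_right k.is_le

/-- The monomials of degree `n` in the two coordinates of a qubit vector: the coordinates of
`v ⊗ ⋯ ⊗ v` on the symmetric subspace. -/
def monomials (n : ℕ) (v : Fin 2 → ℂ) (i : Fin (n + 1)) : ℂ := v 0 ^ (n - i : ℕ) * v 1 ^ (i : ℕ)

lemma monomials_bitWeight (v : Fin 2 → ℂ) (x : Fin N → Fin 2) :
    monomials N v (bitWeight x) = ∏ i, v (x i) := by
  have hv (i : Fin N) : v (x i) = if x i = 1 then v 1 else v 0 := by
    split_ifs with h
    · rw [h]
    · rw [show x i = 0 by omega]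
  simp_rw [hv, Finset.prod_ite, Finset.prod_const, monomials, bitWeight, mul_comm,
    ← Finset.compl_filter, Finset.card_compl, Fintype.card_fin]

lemma exists_monomials_mulVec (n : ℕ) (g : Matrix (Fin 2) (Fin 2) ℂ) :
    ∃ S : Matrix (Fin (n + 1)) (Fin (n + 1)) ℂ, ∀ v, monomials n (g *ᵥ v) = S *ᵥ monomials n v := by
  obtain ⟨r, hr⟩ := bitWeight_surjective.hasRightInverse (f := bitWeight (N := n))
  refine ⟨fun k l => ∑ x with bitWeight x = l, ∏ i, g (r k i) (x i), fun v => funext fun k => ?_⟩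
  calc monomials n (g *ᵥ v) k = ∏ i, ∑ a, g (r k i) a * v a := by
        conv_lhs => rw [← hr k, monomials_bitWeight]
        rfl
    _ = ∑ x : Fin n → Fin 2, (∏ i, g (r k i) (x i)) * monomials n v (bitWeight x) := by
        simp_rw [monomials_bitWeight, ← Finset.prod_mul_distrib]
        exact Fintype.prod_sum _
    _ = ∑ l, ∑ x with bitWeight x = l, (∏ i, g (r k i) (x i)) * monomials n v l := by
        rw [← Finset.sum_fiberwise _ bitWeight]
        exact Finset.sum_congr rfl fun l _ => Finset.sum_congr rfl fun x hx => by
          rw [(Finset.mem_filter.1 hx).2]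
    _ = _ := by simp only [Matrix.mulVec, dotProduct, Finset.sum_mul]

lemma monomials_smul (n : ℕ) (c : ℂ) (v : Fin 2 → ℂ) :
    monomials n (c • v) = c ^ n • monomials n v := by
  ext i
  simp only [monomials, Pi.smul_apply, smul_eq_mul, mul_pow]
  rw [mul_mul_mul_comm, ← pow_add, Nat.sub_add_cancel i.is_le]

end Weight

section Biform

variable {m n : ℕ}

/-- The form of bidegree `(m, n)` in a qubit vector and its conjugate with coefficients `W`. -/
def biform (W : Matrix (Fin (m + 1)) (Fin (n + 1)) ℂ) (v : Fin 2 → ℂ) : ℂ :=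
  monomials m v ⬝ᵥ W *ᵥ star (monomials n v)

lemma biform_apply (W : Matrix (Fin (m + 1)) (Fin (n + 1)) ℂ) (v : Fin 2 → ℂ) :
    biform W v = ∑ i, ∑ j, W i j * (monomials m v i * conj (monomials n v j)) := by
  simp only [biform, dotProduct, Matrix.mulVec, Finset.mul_sum, Pi.star_apply, mul_left_comm]
  rfl

lemma biform_smul (W : Matrix (Fin (m + 1)) (Fin (n + 1)) ℂ) (c : ℂ) (v : Fin 2 → ℂ) :
    biform W (c • v) = c ^ m * conj c ^ n * biform W v := by
  simp only [biform, monomials_smul, star_smul, Matrix.mulVec_smul, smul_dotProduct,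
    dotProduct_smul, smul_eq_mul, star_pow]
  rw [starRingEnd_apply, mul_assoc, mul_left_comm]

lemma exists_biform_mulVec (W : Matrix (Fin (m + 1)) (Fin (n + 1)) ℂ)
    (g : Matrix (Fin 2) (Fin 2) ℂ) :
    ∃ W' : Matrix (Fin (m + 1)) (Fin (n + 1)) ℂ, ∀ v, biform W (g *ᵥ v) = biform W' v := by
  obtain ⟨S, hS⟩ := exists_monomials_mulVec m g
  obtain ⟨T, hT⟩ := exists_monomials_mulVec n g
  refine ⟨Sᵀ * W * Tᴴᵀ, fun v => ?_⟩
  rw [biform, biform, hS, hT, ← Matrix.mulVec_mulVec, ← Matrix.mulVec_mulVec,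
    Matrix.dotProduct_mulVec _ Sᵀ, Matrix.vecMul_transpose, Matrix.mulVec_transpose,
    Matrix.star_mulVec]

lemma biform_conjTranspose (W : Matrix (Fin (m + 1)) (Fin (n + 1)) ℂ) (v : Fin 2 → ℂ) :
    biform Wᴴ v = conj (biform W v) := by
  rw [biform_apply, biform_apply, Finset.sum_comm]
  simp [mul_comm]

lemma monomials_one_cons (n : ℕ) (z : ℂ) (i : Fin (n + 1)) :
    monomials n ![1, z] i = z ^ (i : ℕ) := by
  simp [monomials]

lemma injective_pow_mul_conj_pow :
    Function.Injective fun p : ℕ × ℕ =>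
      (powMonoidHom p.1 * (powMonoidHom p.2).comp (starRingEnd ℂ : ℂ →* ℂ) : ℂ →* ℂ) := by
  intro p q h
  replace h (z : ℂ) : z ^ p.1 * conj z ^ p.2 = z ^ q.1 * conj z ^ q.2 := DFunLike.congr_fun h z
  have hadd : p.1 + p.2 = q.1 + q.2 := by
    have h2 := h 2
    simp only [map_ofNat, ← pow_add] at h2
    exact Nat.pow_right_injective le_rfl (by exact_mod_cast h2)
  have hcross : p.1 + q.2 = q.1 + p.2 := by
    have hω := Complex.isPrimitiveRoot_exp (p.1 + q.2 + q.1 + p.2 + 1) (by omega)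
    set ω := cexp _
    have hconj (k : ℕ) : conj ω ^ k * ω ^ k = 1 := by
      rw [← mul_pow, conj_mul', hω.norm'_eq_one (by omega), ofReal_one, one_pow, one_pow]
    refine hω.pow_inj (by omega) (by omega) ?_
    rw [pow_add, pow_add]
    linear_combination ω ^ p.2 * ω ^ q.2 * h ω - ω ^ p.1 * ω ^ q.2 * hconj p.2
      + ω ^ q.1 * ω ^ p.2 * hconj q.2
  ext <;> omega

lemma biform_eq_zero_iff {W : Matrix (Fin (m + 1)) (Fin (n + 1)) ℂ} :
    (∀ v, biform W v = 0) ↔ W = 0 := by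
  refine ⟨fun h => ?_, fun h v => by simp [h, biform]⟩
  have hind := (linearIndependent_monoidHom ℂ ℂ).comp _ (injective_pow_mul_conj_pow.comp
    (Fin.val_injective.prodMap Fin.val_injective : Function.Injective
      (Prod.map (Fin.val : Fin (m + 1) → ℕ) (Fin.val : Fin (n + 1) → ℕ))))
  have := Fintype.linearIndependent_iff.1 hind (fun p => W p.1 p.2) ?_
  · ext i j
    exact this (i, j)
  · ext z
    have := h ![1, z]
    simp only [biform_apply, monomials_one_cons, ← Fintype.sum_prod_type'] at this
    simpa using this

lemma isHermitian_of_biform_nonneg {W : Matrix (Fin (n + 1)) (Fin (n + 1)) ℂ}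
    (h : ∀ v, 0 ≤ biform W v) : W.IsHermitian := by
  refine sub_eq_zero.1 (biform_eq_zero_iff.1 fun v => ?_)
  rw [biform, Matrix.sub_mulVec, dotProduct_sub, ← biform, ← biform, biform_conjTranspose,
    conj_eq_iff_im.2 (nonneg_iff.1 (h v)).2.symm, sub_self]

lemma exists_biform_eq_zero {ι : Type*} [Fintype ι] (hι : Fintype.card ι < (m + 1) * (n + 1))
    (v : ι → Fin 2 → ℂ) :
    ∃ W : Matrix (Fin (m + 1)) (Fin (n + 1)) ℂ, W ≠ 0 ∧ ∀ i, biform W (v i) = 0 := by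
  let ev : Matrix (Fin (m + 1)) (Fin (n + 1)) ℂ →ₗ[ℂ] ι → ℂ :=
    { toFun := fun W i => biform W (v i)
      map_add' := fun W W' => funext fun i => by simp [biform, Matrix.add_mulVec]
      map_smul' := fun c W => funext fun i => by simp [biform, Matrix.smul_mulVec] }
  obtain ⟨W, hW, hne⟩ := ev.ker.exists_mem_ne_zero_of_ne_bot
    (LinearMap.ker_ne_bot_of_finrank_lt (by simpa [Module.finrank_matrix] using hι))
  exact ⟨W, hne, congrFun (LinearMap.mem_ker.1 hW)⟩

end Biform

/-! ### Zeros of nonnegative biforms -/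

lemma biform_submatrix_rev {m n : ℕ} (W : Matrix (Fin (m + 1)) (Fin (n + 1)) ℂ) (v : Fin 2 → ℂ) :
    biform (W.submatrix Fin.rev Fin.rev) v = biform W ![v 1, v 0] := by
  have hrev (k : ℕ) (i : Fin (k + 1)) : monomials k v i.rev = monomials k ![v 1, v 0] i := by
    simp [monomials, Fin.val_rev, Nat.sub_sub_self i.is_le, mul_comm]
  rw [biform_apply, biform_apply, ← Equiv.sum_comp Fin.revPerm]
  refine Finset.sum_congr rfl fun i _ => ?_
  rw [← Equiv.sum_comp Fin.revPerm]
  simp only [Matrix.submatrix_apply, Fin.revPerm_apply, Fin.rev_rev, hrev]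

lemma exists_biform_mulVec_of_ne_zero {m n : ℕ} {W : Matrix (Fin (m + 1)) (Fin (n + 1)) ℂ}
    (hW : W ≠ 0) {g : Matrix (Fin 2) (Fin 2) ℂ} (hg : IsUnit g.det) :
    ∃ W' : Matrix (Fin (m + 1)) (Fin (n + 1)) ℂ, W' ≠ 0 ∧ ∀ v, biform W (g *ᵥ v) = biform W' v := by
  obtain ⟨W', hW'⟩ := exists_biform_mulVec W g
  refine ⟨W', fun h0 => hW (biform_eq_zero_iff.1 fun v => ?_), hW'⟩
  rw [← Matrix.one_mulVec v, ← Matrix.mul_nonsing_inv g hg, ← Matrix.mulVec_mulVec, hW', h0,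
    biform_eq_zero_iff.2 rfl]

lemma eq_smul_one_cons {v : Fin 2 → ℂ} (h : v 0 ≠ 0) : v = v 0 • ![1, v 1 / v 0] := by
  ext i
  fin_cases i <;> simp [mul_div_cancel₀, h]

lemma eq_smul_zero_one {v : Fin 2 → ℂ} (h : v 0 = 0) : v = v 1 • ![0, 1] := by
  ext i
  fin_cases i <;> simp [h]

lemma biform_eq_zero_iff_of_ne_zero {m n : ℕ} (W : Matrix (Fin (m + 1)) (Fin (n + 1)) ℂ)
    {v : Fin 2 → ℂ} (h : v 0 ≠ 0) : biform W v = 0 ↔ biform W ![1, v 1 / v 0] = 0 := by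
  conv_lhs => rw [eq_smul_one_cons h, biform_smul]
  exact mul_eq_zero_iff_left
    (mul_ne_zero (pow_ne_zero _ h) (pow_ne_zero _ ((map_ne_zero conj).2 h)))

section Standard

variable {W : Matrix (Fin 4) (Fin 4) ℂ}

lemma biform_one_cons (W : Matrix (Fin 4) (Fin 4) ℂ) (z : ℂ) :
    biform W ![1, z] = ∑ i, ∑ j, W i j * (z ^ (i : ℕ) * conj z ^ (j : ℕ)) := by
  rw [biform_apply]
  simp only [monomials_one_cons, map_pow]

lemma corner_eq_zero (h : ∀ v, 0 ≤ biform W v)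
    (h0 : biform W ![1, 0] = 0) : W 0 0 = 0 ∧ W 1 0 = 0 := by
  refine ⟨by simpa [biform_one_cons, Fin.sum_univ_four] using h0,
    eq_zero_of_forall_re_mul_eq_zero fun u => ?_⟩
  have hderiv : HasDerivAt (fun t : ℝ => biform W ![1, t * u])
      (∑ i, ∑ j, W i j * (u ^ (i : ℕ) * conj u ^ (j : ℕ))
        * (((i + j : ℕ) : ℝ) * 0 ^ ((i : ℕ) + j - 1) : ℝ)) 0 := by
    have heq : (fun t : ℝ => biform W ![1, t * u]) = fun t : ℝ =>
        ∑ i, ∑ j, W i j * (u ^ (i : ℕ) * conj u ^ (j : ℕ)) * (t ^ (i + j : ℕ) : ℝ) := by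
      ext t
      simp only [biform_one_cons, map_mul, conj_ofReal, mul_pow]
      refine Finset.sum_congr rfl fun i _ => Finset.sum_congr rfl fun j _ => ?_
      push_cast
      ring
    rw [heq]
    exact .fun_sum fun i _ => .fun_sum fun j _ => (hasDerivAt_pow _ (0 : ℝ)).ofReal_comp.const_mul _
  have hzero := deriv_eq_zero_of_nonneg hderiv (fun t => h _) (by simpa using h0)
  have hherm : W 0 1 = conj (W 1 0) := ((isHermitian_of_biform_nonneg h).apply 0 1).symm
  have hsum : conj (W 1 0) * conj u + W 1 0 * u = 0 := by
    simpa [Fin.sum_univ_four, hherm] using hzero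
  rw [← ofReal_eq_zero, re_eq_add_conj, map_mul]
  linear_combination hsum / 2

lemma biform_eq_quartic (hW : W.IsHermitian) (h00 : W 0 0 = 0) (h10 : W 1 0 = 0)
    (h33 : W 3 3 = 0) (h23 : W 2 3 = 0) (z : ℂ) :
    biform W ![1, z]
      = quartic (W 2 2).re (W 1 1).re (W 3 1) (W 3 0) (W 2 1) (W 2 0) z := by
  have hdiag (i : Fin 4) : ((W i i).re : ℂ) = W i i := conj_eq_iff_re.1 (hW.apply i i)
  have hoff (i j : Fin 4) : conj (W j i) = W i j := hW.apply i j
  have h01 : W 0 1 = 0 := by rw [← hoff, h10, map_zero]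
  have h32 : W 3 2 = 0 := by rw [← hoff, h23, map_zero]
  rw [biform_one_cons]
  simp only [quartic, realQuadratic, realCubic, ofReal_add, ofReal_mul, ofReal_ofNat, hdiag,
    re_eq_add_conj, map_mul, map_pow, hoff, ← mul_conj, Fin.sum_univ_four, h00, h10, h33, h23,
    h01, h32, Fin.coe_ofNat_eq_mod, Nat.reduceMod]
  ring

lemma conic_eq_biform (k : Fin 4 → ℂ) (z : ℂ) :
    biform !![0, k 3; k 2, k 1; k 0, 0] ![1, z] = conic k z := by
  simp only [biform_apply, monomials_one_cons, Nat.reduceAdd, Fin.sum_univ_three, Fin.sum_univ_two,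
    conic, map_pow, Matrix.of_apply, Matrix.cons_val, Fin.coe_ofNat_eq_mod, Nat.reduceMod]
  ring

lemma exists_biform_zero_of_standard_zeros (h : ∀ v, 0 ≤ biform W v) (hne : W ≠ 0)
    (h0 : biform W ![1, 0] = 0) (h1 : biform W ![0, 1] = 0) {ζ : Fin 4 → ℂ} (hinj : ζ.Injective)
    (hζ : ∀ i, ζ i ≠ 0) (hzero : ∀ i, biform W ![1, ζ i] = 0) :
    ∃ q : Matrix (Fin 3) (Fin 2) ℂ, q ≠ 0 ∧ ∀ v, biform W v = 0 → biform q v = 0 := by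
  obtain ⟨h00, h10⟩ := corner_eq_zero h h0
  obtain ⟨h33, h23⟩ : W 3 3 = 0 ∧ W 2 3 = 0 :=
    corner_eq_zero (W := W.submatrix Fin.rev Fin.rev)
      (fun v => (biform_submatrix_rev W v).symm ▸ h _) (by simpa [biform_submatrix_rev] using h1)
  have hquartic := biform_eq_quartic (isHermitian_of_biform_nonneg h) h00 h10 h33 h23
  have hquartic_ne : quartic (W 2 2).re (W 1 1).re (W 3 1) (W 3 0) (W 2 1) (W 2 0) ≠ 0 := by
    refine fun hf => hne (biform_eq_zero_iff.1 fun v => ?_)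
    by_cases hv : v 0 = 0
    · rw [eq_smul_zero_one hv, biform_smul, h1, mul_zero]
    · rw [biform_eq_zero_iff_of_ne_zero _ hv, hquartic, hf, Pi.zero_apply, ofReal_zero]
  obtain ⟨k, hk, hconic⟩ := zerosOnConic_of_four_zeros
    (fun z => zero_le_real.1 (hquartic z ▸ h ![1, z])) hquartic_ne hinj hζ
    (fun i => ofReal_eq_zero.1 (hquartic (ζ i) ▸ hzero i))
  refine ⟨!![0, k 3; k 2, k 1; k 0, 0], fun h0 => hk ?_, fun v hv => ?_⟩
  · have hentry (i j) := congrFun (congrFun h0 i) j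
    ext i
    fin_cases i
    exacts [hentry 2 0, hentry 1 1, hentry 1 0, hentry 0 1]
  · by_cases hv0 : v 0 = 0
    · rw [eq_smul_zero_one hv0, biform_smul]
      simp [biform_apply, monomials, Fin.sum_univ_three]
    · rw [biform_eq_zero_iff_of_ne_zero _ hv0, hquartic, ofReal_eq_zero] at hv
      rw [biform_eq_zero_iff_of_ne_zero _ hv0, conic_eq_biform, hconic _ hv]

end Standard

lemma cross_mulVec (g : Matrix (Fin 2) (Fin 2) ℂ) (v w : Fin 2 → ℂ) :
    (g *ᵥ v) 0 * (g *ᵥ w) 1 - (g *ᵥ v) 1 * (g *ᵥ w) 0 = g.det * (v 0 * w 1 - v 1 * w 0) := by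
  simp only [Matrix.mulVec, dotProduct, Fin.sum_univ_two, Matrix.det_fin_two]
  ring

lemma exists_biform_zero_of_normalized_zeros {W : Matrix (Fin 4) (Fin 4) ℂ}
    (h : ∀ v, 0 ≤ biform W v) (hne : W ≠ 0) {y : Fin 6 → Fin 2 → ℂ}
    (hcross : Pairwise fun i j => y i 0 * y j 1 - y i 1 * y j 0 ≠ 0)
    (hy0 : y 0 = ![1, 0]) (hy1 : y 1 = ![0, 1]) (hzero : ∀ i, biform W (y i) = 0) :
    ∃ q : Matrix (Fin 3) (Fin 2) ℂ, q ≠ 0 ∧ ∀ v, biform W v = 0 → biform q v = 0 := by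
  have hfst (i : Fin 4) : y i.succ.succ 0 ≠ 0 := by
    simpa [hy1] using hcross (Fin.succ_injective _ |>.ne i.succ_ne_zero)
  have hsnd (i : Fin 4) : y i.succ.succ 1 ≠ 0 := by
    simpa [hy0] using hcross i.succ.succ_ne_zero
  have hinj : Function.Injective fun i : Fin 4 => y i.succ.succ 1 / y i.succ.succ 0 := by
    intro i j hij
    rw [div_eq_div_iff (hfst i) (hfst j)] at hij
    by_contra hne'
    exact hcross (by simpa using hne' : i.succ.succ ≠ j.succ.succ) (by linear_combination -hij)
  exact exists_biform_zero_of_standard_zeros h hne (hy0 ▸ hzero 0) (hy1 ▸ hzero 1) hinj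
    (fun i => div_ne_zero (hsnd i) (hfst i))
    (fun i => (biform_eq_zero_iff_of_ne_zero _ (hfst i)).1 (hzero _))

lemma exists_biform_zero_of_six_zeros {W : Matrix (Fin 4) (Fin 4) ℂ} (h : ∀ v, 0 ≤ biform W v)
    (hne : W ≠ 0) {u : Fin 6 → Fin 2 → ℂ}
    (hu : Pairwise fun i j => u i 0 * u j 1 - u i 1 * u j 0 ≠ 0) (hzero : ∀ i, biform W (u i) = 0) :
    ∃ q : Matrix (Fin 3) (Fin 2) ℂ, q ≠ 0 ∧ ∀ v, biform W v = 0 → biform q v = 0 := by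
  set g : Matrix (Fin 2) (Fin 2) ℂ := !![u 0 0, u 1 0; u 0 1, u 1 1]
  have hg : IsUnit g.det := by
    rw [isUnit_iff_ne_zero, Matrix.det_fin_two_of, mul_comm (u 1 0)]
    exact hu (by decide)
  have hginv := Matrix.isUnit_nonsing_inv_det g hg
  have hinv (v) : g *ᵥ g⁻¹ *ᵥ v = v := by
    rw [Matrix.mulVec_mulVec, Matrix.mul_nonsing_inv g hg, Matrix.one_mulVec]
  have hcol {v} {i} (hv : g *ᵥ v = u i) : g⁻¹ *ᵥ u i = v := by
    rw [← hv, Matrix.mulVec_mulVec, Matrix.nonsing_inv_mul g hg, Matrix.one_mulVec]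
  obtain ⟨W', hW', hgW⟩ := exists_biform_mulVec_of_ne_zero hne hg
  obtain ⟨q, hq, hqzero⟩ := exists_biform_zero_of_normalized_zeros (y := fun i => g⁻¹ *ᵥ u i)
    (fun v => hgW v ▸ h _) hW'
    (fun i j hij => (cross_mulVec _ _ _).trans_ne (mul_ne_zero hginv.ne_zero (hu hij)))
    (hcol (by ext i; fin_cases i <;> simp [g])) (hcol (by ext i; fin_cases i <;> simp [g]))
    (fun i => by rw [← hgW, hinv, hzero])
  obtain ⟨q', hq', hgq⟩ := exists_biform_mulVec_of_ne_zero hq hginv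
  exact ⟨q', hq', fun v hv => by rw [← hgq, hqzero _ (by rw [← hgW, hinv, hv])]⟩

lemma biform_rep_mk_eq_zero_iff {m n : ℕ} {W : Matrix (Fin (m + 1)) (Fin (n + 1)) ℂ}
    {v : Fin 2 → ℂ} (hv : v ≠ 0) :
    biform W (Projectivization.mk ℂ v hv).rep = 0 ↔ biform W v = 0 := by
  obtain ⟨c, hc⟩ := Projectivization.exists_smul_eq_mk_rep ℂ v hv
  rw [← hc, Units.smul_def, biform_smul]
  simp

lemma exists_injective_zeros {k m n : ℕ} {W : Matrix (Fin (k + 1)) (Fin (k + 1)) ℂ}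
    (hq : ∀ q : Matrix (Fin (m + 2)) (Fin (n + 1)) ℂ,
      q ≠ 0 → ∃ v, biform W v = 0 ∧ biform q v ≠ 0) :
    ∃ p : Fin ((m + 2) * (n + 1)) → ℙ ℂ (Fin 2 → ℂ),
      p.Injective ∧ ∀ i, biform W (p i).rep = 0 := by
  let Z := {p : ℙ ℂ (Fin 2 → ℂ) // biform W p.rep = 0}
  suffices Nonempty (Fin ((m + 2) * (n + 1)) ↪ Z) from
    this.elim fun p => ⟨fun i => (p i).1, Subtype.val_injective.comp p.injective, fun i => (p i).2⟩
  rcases finite_or_infinite Z with hfin | hinf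
  · have := Fintype.ofFinite Z
    refine Function.Embedding.nonempty_of_card_le (not_lt.1 fun hcard => ?_)
    rw [Fintype.card_fin] at hcard
    obtain ⟨q, hq0, hqZ⟩ := exists_biform_eq_zero hcard fun p : Z => p.1.rep
    obtain ⟨v, hWv, hqv⟩ := hq q hq0
    have hv : v ≠ 0 := by
      rintro rfl
      exact hqv (by simpa using biform_smul q 0 0)
    exact hqv ((biform_rep_mk_eq_zero_iff hv).1
      (hqZ ⟨_, (biform_rep_mk_eq_zero_iff hv).2 hWv⟩))
  · exact ⟨(Fin.valEmbedding).trans (Infinite.natEmbedding Z)⟩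

lemma cross_rep_ne_zero {p p' : ℙ ℂ (Fin 2 → ℂ)} (h : p ≠ p') :
    p.rep 0 * p'.rep 1 - p.rep 1 * p'.rep 0 ≠ 0 := by
  have hind := Projectivization.independent_iff.1
    ((Projectivization.independent_pair_iff_ne p p').2 h)
  have : IsUnit (Matrix.of (Projectivization.rep ∘ ![p, p'])).det :=
    (Matrix.isUnit_iff_isUnit_det _).1 (Matrix.linearIndependent_rows_iff_isUnit.1 hind)
  simpa [Matrix.det_fin_two] using this

/-- If no such `q` exists, the zeros of `W` have six directions, because five vectors impose only
five linear conditions on the six coefficients of `q`. -/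
theorem exists_biform_zero_of_zeros {W : Matrix (Fin 4) (Fin 4) ℂ} (h : ∀ v, 0 ≤ biform W v)
    (hne : W ≠ 0) :
    ∃ q : Matrix (Fin 3) (Fin 2) ℂ, q ≠ 0 ∧ ∀ v, biform W v = 0 → biform q v = 0 := by
  by_contra! hq
  obtain ⟨p, hp, hzero⟩ := exists_injective_zeros hq
  obtain ⟨q, hq0, hqzero⟩ := exists_biform_zero_of_six_zeros h hne
    (fun i j hij => cross_rep_ne_zero (hp.ne hij)) hzero
  obtain ⟨v, hWv, hqv⟩ := hq q hq0
  exact hqv (hqzero v hWv)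

/-! ### Convex sets in finite dimension -/

lemma eq_zero_of_mem_convexHull {E : Type*} [AddCommGroup E] [Module ℝ E] {s : Set E}
    {f g : E →ₗ[ℝ] ℝ} (hf : ∀ z ∈ s, 0 ≤ f z)
    (hfg : ∀ z ∈ s, f z = 0 → g z = 0) {p : E} (hp : p ∈ convexHull ℝ s) (hfp : f p = 0) :
    g p = 0 := by
  obtain ⟨ι, _, w, z, hw, -, hz, rfl⟩ := mem_convexHull_iff_exists_fintype.1 hp
  simp only [map_sum, map_smul, smul_eq_mul] at hfp ⊢
  have hterm := (Finset.sum_eq_zero_iff_of_nonneg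
    fun i _ => mul_nonneg (hw i) (hf _ (hz i))).1 hfp
  refine Finset.sum_eq_zero fun i hi => mul_eq_zero.2 ?_
  exact (mul_eq_zero.1 (hterm i hi)).imp_right (hfg _ (hz i))

section Convex

variable {E : Type*} [AddCommGroup E] [Module ℝ E] [FiniteDimensional ℝ E] {s : Set E}

lemma exists_fin_sum_eq_of_mem_convexHull {x : E} (hx : x ∈ convexHull ℝ s) :
    ∃ k ≤ Module.finrank ℝ E + 1, ∃ w ∈ stdSimplex ℝ (Fin k), ∃ z : Fin k → E,
      (∀ i, z i ∈ s) ∧ ∑ i, w i • z i = x := by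
  obtain ⟨ι, _, z, w, hz, hind, hw, hw1, rfl⟩ := eq_pos_convex_span_of_mem_convexHull hx
  have e := Fintype.equivFin ι
  refine ⟨_, hind.card_le_finrank_succ.trans (Nat.succ_le_succ (Submodule.finrank_le _)),
    w ∘ e.symm, ⟨fun i => (hw _).le, ?_⟩, z ∘ e.symm, fun i => hz ⟨_, rfl⟩, ?_⟩
  · exact (Equiv.sum_comp e.symm w).trans hw1
  · exact Equiv.sum_comp e.symm fun i => w i • z i

variable [TopologicalSpace E] [IsTopologicalAddGroup E] [ContinuousSMul ℝ E]

lemma isCompact_convexHull (hs : IsCompact s) : IsCompact (convexHull ℝ s) := by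
  have hcomb (k : ℕ) : IsCompact ((fun p : (Fin k → ℝ) × (Fin k → E) => ∑ i, p.1 i • p.2 i) ''
      (stdSimplex ℝ (Fin k) ×ˢ Set.univ.pi fun _ => s)) :=
    ((isCompact_stdSimplex ℝ _).prod (isCompact_univ_pi fun _ => hs)).image (by fun_prop)
  convert (Finset.range (Module.finrank ℝ E + 2)).isCompact_biUnion fun k _ => hcomb k
  refine Set.Subset.antisymm (fun x hx => ?_) (Set.iUnion₂_subset fun k _ => ?_)
  · obtain ⟨k, hk, w, hw, z, hz, rfl⟩ := exists_fin_sum_eq_of_mem_convexHull hx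
    exact Set.mem_biUnion (Finset.mem_coe.2 (Finset.mem_range_succ_iff.2 hk))
      ⟨(w, z), ⟨hw, fun i _ => hz i⟩, rfl⟩
  · rintro _ ⟨⟨w, z⟩, ⟨hw, hz⟩, rfl⟩
    exact (convex_convexHull ℝ s).sum_mem (fun i _ => hw.1 i) hw.2
      fun i _ => subset_convexHull ℝ s (hz i trivial)

end Convex

lemma exists_mem_inter_support_of_inner {E : Type*} [NormedAddCommGroup E] [InnerProductSpace ℝ E]
    {K U : Set E} (hK : IsComplete K) (hKconv : Convex ℝ K) (hU : IsOpen U) {x c : E}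
    (hxc : segment ℝ x c ⊆ U) (hx : x ∉ K) (hc : c ∈ K) :
    ∃ p ∈ K ∩ U, ∃ y ∈ segment ℝ x c, y ≠ p ∧ ∀ k ∈ K, inner ℝ (y - p) (k - p) ≤ 0 := by
  obtain ⟨b, hb, hbK, hbcl⟩ :
      (segment ℝ x c ∩ (K ∩ closure (segment ℝ x c \ K))).Nonempty := by
    refine isPreconnected_closed_iff.1 (convex_segment x c).isPreconnected _ _ hK.isClosed
      isClosed_closure (fun z hz => ?_) ⟨c, right_mem_segment ℝ x c, hc⟩
      ⟨x, left_mem_segment ℝ x c, subset_closure ⟨left_mem_segment ℝ x c, hx⟩⟩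
    exact (em (z ∈ K)).imp_right fun hzK => subset_closure ⟨hz, hzK⟩
  obtain ⟨ε, hε, hball⟩ := Metric.isOpen_iff.1 hU b (hxc hb)
  obtain ⟨y, ⟨hy, hyK⟩, hby⟩ := Metric.mem_closure_iff.1 hbcl (ε / 2) (half_pos hε)
  obtain ⟨p, hp, hyp⟩ := exists_norm_eq_iInf_of_complete_convex ⟨c, hc⟩ hK hKconv y
  have hle : ‖y - p‖ ≤ ‖y - b‖ :=
    hyp.trans_le (ciInf_le ⟨0, Set.forall_mem_range.2 fun _ => norm_nonneg _⟩ (⟨b, hbK⟩ : K))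
  refine ⟨p, ⟨hp, hball ?_⟩, y, hy, fun h => hyK (h ▸ hp),
    (norm_eq_iInf_iff_real_inner_le_zero hKconv hp).1 hyp⟩
  rw [← dist_eq_norm, ← dist_eq_norm, dist_comm y p, dist_comm y b] at hle
  calc dist p b ≤ dist p y + dist y b := dist_triangle p y b
    _ < ε := by rw [dist_comm y b]; linarith

lemma exists_mem_inter_support {E : Type*} [AddCommGroup E] [Module ℝ E] [FiniteDimensional ℝ E]
    [TopologicalSpace E] [IsTopologicalAddGroup E] [ContinuousSMul ℝ E] [T2Space E] {K U : Set E}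
    (hK : IsClosed K) (hKconv : Convex ℝ K) (hU : IsOpen U) {x c : E}
    (hxc : segment ℝ x c ⊆ U) (hx : x ∉ K) (hc : c ∈ K) :
    ∃ p ∈ K ∩ U, ∃ y ∈ segment ℝ x c, ∃ f : E →ₗ[ℝ] ℝ, f y < f p ∧ ∀ k ∈ K, f p ≤ f k := by
  let e : E ≃L[ℝ] EuclideanSpace ℝ (Fin (Module.finrank ℝ E)) := toEuclidean
  have hseg : segment ℝ (e x) (e c) = e '' segment ℝ x c :=
    (image_segment ℝ e.toLinearEquiv.toLinearMap.toAffineMap x c).symm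
  obtain ⟨_, ⟨⟨p, hp, rfl⟩, hpU⟩, _, hy', hne, hle⟩ :=
    exists_mem_inter_support_of_inner (K := e '' K) (U := e '' U) (x := e x) (c := e c)
    ((e.toHomeomorph.isClosed_image.2 hK).isComplete) (hKconv.linear_image e.toLinearMap)
    (e.toHomeomorph.isOpen_image.2 hU) (hseg ▸ Set.image_mono hxc)
    (by rwa [e.injective.mem_set_image]) (Set.mem_image_of_mem e hc)
  obtain ⟨y, hy, rfl⟩ := hseg ▸ hy'
  refine ⟨p, ⟨hp, e.injective.mem_set_image.1 hpU⟩, y, hy,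
    -(innerₛₗ ℝ (e y - e p) ∘ₗ e.toLinearMap), ?_, fun k hk => ?_⟩
  · refine neg_lt_neg (sub_pos.1 ?_)
    exact (real_inner_self_pos.2 (sub_ne_zero.2 hne)).trans_eq (inner_sub_right _ _ _)
  · refine neg_le_neg (sub_nonpos.1 ?_)
    exact (inner_sub_right _ _ _).symm.trans_le (hle _ (Set.mem_image_of_mem e hk))

lemma exists_sum_mul_eq_of_isHermitian {n : Type*} [Fintype n] (f : Matrix n n ℂ →ₗ[ℝ] ℝ) :
    ∃ W : Matrix n n ℂ, ∀ m : Matrix n n ℂ, m.IsHermitian → ∑ i, ∑ j, W i j * m i j = f m := by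
  classical
  let F : Module.Dual ℂ (Matrix n n ℂ) := Module.Dual.extendRCLike f
  refine ⟨fun i j => (F (.single i j 1) + conj (F (.single j i 1))) / 2, fun m hm => ?_⟩
  have hF : ∑ i, ∑ j, m i j * F (.single i j 1) = F m := by
    conv_rhs => rw [Matrix.matrix_eq_sum_single m]
    simp only [map_sum, ← smul_eq_mul, ← map_smul, Matrix.smul_single]
    simp only [smul_eq_mul, mul_one]
  have hconj : ∑ i, ∑ j, m i j * conj (F (.single j i 1)) = conj (F m) := by
    rw [← hF, Finset.sum_comm]
    simp only [map_sum, map_mul, starRingEnd_apply, hm.apply]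
  calc _ = (∑ i, ∑ j, m i j * F (.single i j 1)
        + ∑ i, ∑ j, m i j * conj (F (.single j i 1))) / 2 := by
        simp only [← Finset.sum_add_distrib, Finset.sum_div]
        exact Finset.sum_congr rfl fun i _ => Finset.sum_congr rfl fun j _ => by ring
    _ = f m := by
        rw [hF, hconj, ← re_eq_add_conj]
        exact congrArg _ (Module.Dual.re_extendRCLike_apply (𝕜 := ℂ) f m)

/-! ### Separable moment matrices -/

section Moments

variable {m n : ℕ}

/-- The entries of the product state `(v v†)^{⊗n}`, which depend only on the weights of the row and
the column. A matrix indexed by weights represents in the same way any operator on the symmetric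
subspace. -/
def productMoments (n : ℕ) (v : Fin 2 → ℂ) : Matrix (Fin (n + 1)) (Fin (n + 1)) ℂ :=
  Matrix.vecMulVec (monomials n v) (star (monomials n v))

/-- The trace of the symmetric `n`-qubit operator that a moment matrix represents. -/
def momentTrace (n : ℕ) : Matrix (Fin (n + 1)) (Fin (n + 1)) ℂ →ₗ[ℝ] ℝ :=
  ∑ k : Fin (n + 1), (n.choose k : ℝ) • reLm ∘ₗ Matrix.entryLinearMap ℝ ℂ k k

/-- The moment matrices of the separable symmetric `n`-qubit states of trace one. -/
def separableStates (n : ℕ) : Set (Matrix (Fin (n + 1)) (Fin (n + 1)) ℂ) :=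
  convexHull ℝ (productMoments n '' {v | normSq (v 0) + normSq (v 1) = 1})

/-- The moment matrix of the projector onto the symmetric subspace, divided by its trace. -/
def maximallyMixed (n : ℕ) : Matrix (Fin (n + 1)) (Fin (n + 1)) ℂ :=
  Matrix.diagonal fun k => (((n + 1) * n.choose k : ℝ)⁻¹ : ℝ)

/-- The weight of the concatenation of two strings of weights `a` and `b`. -/
def addWeight (a : Fin (m + 1)) (b : Fin (n + 1)) : Fin (m + n + 1) := ⟨a + b, by omega⟩

/-- The quadratic form at `q` of the transpose, on the last `n` qubits, of the symmetric operator on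
`m + n` qubits with a given moment matrix. -/
def partialTransposeForm (q : Matrix (Fin (m + 1)) (Fin (n + 1)) ℂ) :
    Matrix (Fin (m + n + 1)) (Fin (m + n + 1)) ℂ →ₗ[ℝ] ℝ where
  toFun σ := (∑ a, ∑ b, ∑ a', ∑ b',
    q a b * conj (q a' b') * σ (addWeight a b') (addWeight a' b)).re
  map_add' σ τ := by simp only [Matrix.add_apply, mul_add, Finset.sum_add_distrib, add_re]
  map_smul' c σ := by
    simp only [Matrix.smul_apply, mul_smul_comm, ← Finset.smul_sum, smul_re, RingHom.id_apply]

lemma partialTransposeForm_apply (q : Matrix (Fin (m + 1)) (Fin (n + 1)) ℂ)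
    (σ : Matrix (Fin (m + n + 1)) (Fin (m + n + 1)) ℂ) :
    partialTransposeForm q σ = (∑ a, ∑ b, ∑ a', ∑ b',
      q a b * conj (q a' b') * σ (addWeight a b') (addWeight a' b)).re := rfl

lemma momentTrace_apply (σ : Matrix (Fin (n + 1)) (Fin (n + 1)) ℂ) :
    momentTrace n σ = ∑ k : Fin (n + 1), n.choose k * (σ k k).re := by
  simp [momentTrace]

lemma productMoments_smul (c : ℂ) (v : Fin 2 → ℂ) :
    productMoments n (c • v) = normSq c ^ n • productMoments n v := by
  rw [productMoments, monomials_smul, star_smul, Matrix.smul_vecMulVec, Matrix.vecMulVec_smul,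
    smul_smul, star_pow, ← mul_pow, star_def, mul_conj, ← ofReal_pow, coe_smul, productMoments]

lemma isHermitian_productMoments (v : Fin 2 → ℂ) : (productMoments n v).IsHermitian := by
  rw [Matrix.IsHermitian, productMoments, Matrix.conjTranspose_vecMulVec, star_star]

lemma momentTrace_productMoments (v : Fin 2 → ℂ) :
    momentTrace n (productMoments n v) = (normSq (v 0) + normSq (v 1)) ^ n := by
  rw [momentTrace_apply, add_comm (normSq _), add_pow, Finset.sum_range]
  refine Finset.sum_congr rfl fun k _ => ?_
  rw [productMoments, Matrix.vecMulVec_apply, Pi.star_apply, star_def, mul_conj, ofReal_re,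
    monomials, map_mul, map_pow, map_pow]
  ring

lemma partialTransposeForm_productMoments (q : Matrix (Fin (m + 1)) (Fin (n + 1)) ℂ)
    (v : Fin 2 → ℂ) :
    partialTransposeForm q (productMoments (m + n) v) = normSq (biform q v) := by
  have hmon (a : Fin (m + 1)) (b : Fin (n + 1)) :
      monomials (m + n) v (addWeight a b) = monomials m v a * monomials n v b := by
    simp only [monomials, addWeight]
    rw [show m + n - (a + b : ℕ) = m - a + (n - b) by omega]
    ring
  have hmul : ∑ a, ∑ b, ∑ a', ∑ b', q a b * conj (q a' b')
      * productMoments (m + n) v (addWeight a b') (addWeight a' b)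
        = conj (biform q v) * biform q v := by
    rw [biform_apply]
    simp only [map_sum, Finset.sum_mul, Finset.mul_sum]
    refine Finset.sum_congr rfl fun a _ => Finset.sum_congr rfl fun b _ =>
      Finset.sum_congr rfl fun a' _ => Finset.sum_congr rfl fun b' _ => ?_
    rw [productMoments, Matrix.vecMulVec_apply, Pi.star_apply, star_def, hmon, hmon]
    simp only [map_mul, conj_conj]
    ring
  rw [partialTransposeForm_apply, hmul, mul_comm, mul_conj, ofReal_re]

lemma exists_eq_smul_normSq_eq_one (v : Fin 2 → ℂ) :
    ∃ c : ℂ, ∃ u, normSq (u 0) + normSq (u 1) = 1 ∧ v = c • u := by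
  rcases eq_or_ne v 0 with rfl | hv
  · exact ⟨0, ![1, 0], by simp, (zero_smul _ _).symm⟩
  have hpos : 0 < normSq (v 0) + normSq (v 1) := by
    refine (add_nonneg (normSq_nonneg _) (normSq_nonneg _)).lt_of_ne' fun h => hv ?_
    rw [add_eq_zero_iff_of_nonneg (normSq_nonneg _) (normSq_nonneg _)] at h
    ext i
    fin_cases i
    exacts [normSq_eq_zero.1 h.1, normSq_eq_zero.1 h.2]
  have hc : ((√(normSq (v 0) + normSq (v 1)) : ℝ) : ℂ) ≠ 0 :=
    ofReal_ne_zero.2 (Real.sqrt_pos.2 hpos).ne'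
  refine ⟨_, (√(normSq (v 0) + normSq (v 1)) : ℂ)⁻¹ • v, ?_, (smul_inv_smul₀ hc v).symm⟩
  rw [Pi.smul_apply, Pi.smul_apply, smul_eq_mul, smul_eq_mul, map_mul, map_mul, ← mul_add,
    map_inv₀, normSq_ofReal, Real.mul_self_sqrt hpos.le, inv_mul_cancel₀ hpos.ne']

lemma productMoments_nonneg {f : Matrix (Fin (n + 1)) (Fin (n + 1)) ℂ →ₗ[ℝ] ℝ}
    (hf : ∀ σ ∈ separableStates n, 0 ≤ f σ) (v : Fin 2 → ℂ) : 0 ≤ f (productMoments n v) := by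
  obtain ⟨c, u, hu, rfl⟩ := exists_eq_smul_normSq_eq_one v
  rw [productMoments_smul, map_smul]
  exact smul_nonneg (pow_nonneg (normSq_nonneg c) n) (hf _ (subset_convexHull _ _ ⟨u, hu, rfl⟩))

lemma momentTrace_eq_one {σ : Matrix (Fin (n + 1)) (Fin (n + 1)) ℂ} (hσ : σ ∈ separableStates n) :
    momentTrace n σ = 1 := by
  have hconv : Convex ℝ {σ | momentTrace n σ = 1} :=
    convex_hyperplane (momentTrace n).isLinear 1
  refine convexHull_min ?_ hconv hσ
  rintro _ ⟨v, hv, rfl⟩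
  exact (momentTrace_productMoments v).trans (hv.symm ▸ one_pow n)

lemma isHermitian_of_mem_separableStates {σ : Matrix (Fin (n + 1)) (Fin (n + 1)) ℂ}
    (hσ : σ ∈ separableStates n) : σ.IsHermitian := by
  refine convexHull_min (t := selfAdjoint.submodule ℝ (Matrix (Fin (n + 1)) (Fin (n + 1)) ℂ)) ?_
    (Submodule.convex _) hσ
  rintro _ ⟨v, -, rfl⟩
  exact isHermitian_productMoments v

lemma isCompact_separableStates (n : ℕ) : IsCompact (separableStates n) := by
  refine isCompact_convexHull (IsCompact.image ?_ ?_)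
  · refine Metric.isCompact_of_isClosed_isBounded (isClosed_eq ?_ continuous_const) ?_
    · fun_prop
    · refine (Metric.isBounded_closedBall (x := 0) (r := 1)).subset fun v hv => ?_
      rw [mem_closedBall_zero_iff, pi_norm_le_iff_of_nonneg zero_le_one]
      intro i
      rw [← sq_le_one_iff₀ (norm_nonneg _), ← normSq_eq_norm_sq, ← hv.out]
      fin_cases i
      exacts [le_add_of_nonneg_right (normSq_nonneg _), le_add_of_nonneg_left (normSq_nonneg _)]
  · unfold productMoments monomials Matrix.vecMulVec
    fun_prop

lemma partialTransposeForm_smul (c : ℂ) (q : Matrix (Fin (m + 1)) (Fin (n + 1)) ℂ)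
    (σ : Matrix (Fin (m + n + 1)) (Fin (m + n + 1)) ℂ) :
    partialTransposeForm (c • q) σ = normSq c * partialTransposeForm q σ := by
  rw [partialTransposeForm_apply, partialTransposeForm_apply, ← re_ofReal_mul, ← mul_conj]
  simp only [Finset.mul_sum, Matrix.smul_apply, smul_eq_mul, map_mul, mul_assoc, mul_left_comm]

open scoped Matrix.Norms.Elementwise in
lemma isOpen_setOf_partialTransposeForm_pos (m n : ℕ) :
    IsOpen {σ | ∀ q : Matrix (Fin (m + 1)) (Fin (n + 1)) ℂ,
      q ≠ 0 → 0 < partialTransposeForm q σ} := by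
  refine isOpen_iff_eventually.2 fun σ hσ => ?_
  have : ProperSpace (Matrix (Fin (m + 1)) (Fin (n + 1)) ℂ) := .of_locallyCompactSpace ℂ
  have hsphere : ∀ᶠ τ in 𝓝 σ, ∀ q ∈ Metric.sphere (0 : Matrix (Fin (m + 1)) (Fin (n + 1)) ℂ) 1,
      0 < partialTransposeForm q τ := by
    refine (isCompact_sphere _ _).eventually_forall_of_forall_eventually fun q hq => ?_
    refine ContinuousAt.eventually_lt continuousAt_const (Continuous.continuousAt ?_)
      (hσ _ (ne_zero_of_mem_unit_sphere ⟨q, hq⟩))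
    simp only [partialTransposeForm_apply]
    fun_prop
  filter_upwards [hsphere] with τ hτ q hq
  have hunit := hτ ((‖q‖ : ℂ)⁻¹ • q) (by
    rw [mem_sphere_zero_iff_norm, norm_smul, norm_inv, norm_real, norm_norm,
      inv_mul_cancel₀ (norm_ne_zero_iff.2 hq)])
  rw [partialTransposeForm_smul] at hunit
  exact pos_of_mul_pos_right hunit (normSq_nonneg _)

end Moments

/-! ### Partial transposition criterion for three qubits -/

/-- The squared norm on biforms that is dual to the one on symmetric vectors. -/
def binomialNormSq {m n : ℕ} (q : Matrix (Fin (m + 1)) (Fin (n + 1)) ℂ) : ℝ :=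
  ∑ b : Fin (n + 1), ∑ a : Fin (m + 1), normSq (q a b) / (m.choose a * n.choose b)

/-- The vertices of an octahedron on the Bloch sphere. -/
def octahedron : Fin 6 → Fin 2 → ℂ :=
  ![![1, 0], ![0, 1], ![1, 1], ![1, -1], ![1, I], ![1, -I]]

lemma sum_smul_productMoments_mem {n : ℕ} {ι : Type*} [Fintype ι] {w : ι → ℝ} (hw : ∀ i, 0 ≤ w i)
    (v : ι → Fin 2 → ℂ) (htrace : momentTrace n (∑ i, w i • productMoments n (v i)) = 1) :
    ∑ i, w i • productMoments n (v i) ∈ separableStates n := by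
  choose c u hu hv using fun i => exists_eq_smul_normSq_eq_one (v i)
  have hsmul (i) : w i • productMoments n (v i)
      = (w i * normSq (c i) ^ n) • productMoments n (u i) := by
    rw [hv, productMoments_smul, smul_smul]
  simp only [hsmul, map_sum, map_smul, momentTrace_productMoments, hu, one_pow, smul_eq_mul,
    mul_one] at htrace ⊢
  exact (convex_convexHull ℝ _).sum_mem
    (fun i _ => mul_nonneg (hw i) (pow_nonneg (normSq_nonneg _) n)) htrace
    fun i _ => subset_convexHull _ _ ⟨u i, hu i, rfl⟩

lemma maximallyMixed_eq_sum_octahedron :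
    maximallyMixed 3 =
      ∑ i, (![1 / 6, 1 / 6, 1 / 48, 1 / 48, 1 / 48, 1 / 48] i : ℝ) •
        productMoments 3 (octahedron i) := by
  ext i j
  simp only [Fin.sum_univ_six, Matrix.add_apply, Matrix.smul_apply, productMoments,
    Matrix.vecMulVec_apply, octahedron, maximallyMixed, monomials, Pi.star_apply]
  fin_cases i <;> fin_cases j <;> simp <;> norm_num [pow_succ]

lemma momentTrace_maximallyMixed (n : ℕ) : momentTrace n (maximallyMixed n) = 1 := by
  have hn : (n + 1 : ℝ) ≠ 0 := n.cast_add_one_ne_zero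
  have hterm (k : Fin (n + 1)) :
      (n.choose k : ℝ) * ((n + 1) * n.choose k : ℝ)⁻¹ = (n + 1 : ℝ)⁻¹ := by
    have : (n.choose k : ℝ) ≠ 0 := Nat.cast_ne_zero.2 (Nat.choose_pos k.is_le).ne'
    field_simp
  simp only [momentTrace_apply, maximallyMixed, Matrix.diagonal_apply_eq, ofReal_re, hterm,
    Finset.sum_const, Finset.card_univ, Fintype.card_fin, nsmul_eq_mul, Nat.cast_add_one]
  exact mul_inv_cancel₀ hn

lemma maximallyMixed_mem_separableStates : maximallyMixed 3 ∈ separableStates 3 := by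
  have htrace := momentTrace_maximallyMixed 3
  rw [maximallyMixed_eq_sum_octahedron] at htrace ⊢
  refine sum_smul_productMoments_mem (fun i => ?_) _ htrace
  fin_cases i <;> norm_num

lemma binomialNormSq_le_partialTransposeForm (q : Matrix (Fin 3) (Fin 2) ℂ) :
    binomialNormSq q ≤ 12 * partialTransposeForm q (maximallyMixed 3) := by
  have hsq : 12 * partialTransposeForm q (maximallyMixed 3)
      = binomialNormSq q + 2 * normSq (q 0 0 + q 1 1 / 2) + 2 * normSq (q 2 1 + q 1 0 / 2) := by
    simp only [partialTransposeForm_apply, binomialNormSq, Nat.reduceAdd, Fin.sum_univ_three,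
      Fin.sum_univ_two, addWeight, maximallyMixed, Matrix.diagonal_apply, normSq_apply]
    norm_num
    ring
  rw [hsq, add_assoc]
  exact le_add_of_nonneg_right
    (add_nonneg (mul_nonneg zero_le_two (normSq_nonneg _))
      (mul_nonneg zero_le_two (normSq_nonneg _)))

lemma binomialNormSq_pos {m n : ℕ} {q : Matrix (Fin (m + 1)) (Fin (n + 1)) ℂ} (hq : q ≠ 0) :
    0 < binomialNormSq q := by
  have hterm (a : Fin (m + 1)) (b : Fin (n + 1)) :
      0 ≤ normSq (q a b) / (m.choose a * n.choose b : ℝ) :=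
    div_nonneg (normSq_nonneg _) (by positivity)
  obtain ⟨a, b, hab⟩ : ∃ a b, q a b ≠ 0 := by
    contrapose! hq
    exact Matrix.ext hq
  refine Finset.sum_pos' (fun b _ => Finset.sum_nonneg fun a _ => hterm a b)
    ⟨b, Finset.mem_univ b, Finset.sum_pos' (fun a _ => hterm a b) ⟨a, Finset.mem_univ a, ?_⟩⟩
  have ha := Nat.choose_pos a.is_le
  have hb := Nat.choose_pos b.is_le
  exact div_pos (normSq_pos.2 hab) (by positivity)

lemma partialTransposeForm_maximallyMixed_pos {q : Matrix (Fin 3) (Fin 2) ℂ} (hq : q ≠ 0) :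
    0 < partialTransposeForm q (maximallyMixed 3) :=
  pos_of_mul_pos_right ((binomialNormSq_pos hq).trans_le (binomialNormSq_le_partialTransposeForm q))
    (by norm_num)

lemma exists_biform_support {n : ℕ} {U : Set (Matrix (Fin (n + 1)) (Fin (n + 1)) ℂ)}
    (hU : IsOpen U) {σ τ : Matrix (Fin (n + 1)) (Fin (n + 1)) ℂ} (hσ : σ.IsHermitian)
    (htrace : momentTrace n σ = 1) (hnot : σ ∉ separableStates n) (hτ : τ ∈ separableStates n)
    (hsegment : segment ℝ σ τ ⊆ U) :
    ∃ p ∈ separableStates n ∩ U, ∃ g : Matrix (Fin (n + 1)) (Fin (n + 1)) ℂ →ₗ[ℝ] ℝ,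
      g p = 0 ∧ (∀ v, 0 ≤ g (productMoments n v)) ∧
        ∃ W : Matrix (Fin (n + 1)) (Fin (n + 1)) ℂ, W ≠ 0 ∧
          ∀ v, biform W v = g (productMoments n v) := by
  obtain ⟨p, hp, y, hy, f, hfy, hf⟩ :=
    exists_mem_inter_support (isCompact_separableStates n).isClosed (convex_convexHull ℝ _)
      hU hsegment hnot hτ
  have hy_isHermitian : y.IsHermitian :=
    (selfAdjoint.submodule ℝ (Matrix (Fin (n + 1)) (Fin (n + 1)) ℂ)).convex.segment_subset hσ
      (isHermitian_of_mem_separableStates hτ) hy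
  have hy_trace : momentTrace n y = 1 :=
    (convex_hyperplane (momentTrace n).isLinear 1).segment_subset htrace (momentTrace_eq_one hτ) hy
  let g := f - f p • momentTrace n
  have hg_apply {υ} (hυ : momentTrace n υ = 1) : g υ = f υ - f p := by
    simp only [g, LinearMap.sub_apply, LinearMap.smul_apply, hυ, smul_eq_mul, mul_one]
  have hg : ∀ υ ∈ separableStates n, 0 ≤ g υ := fun υ hυ => by
    rw [hg_apply (momentTrace_eq_one hυ)]
    exact sub_nonneg.2 (hf υ hυ)
  obtain ⟨W, hW⟩ := exists_sum_mul_eq_of_isHermitian g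
  refine ⟨p, hp, g, (hg_apply (momentTrace_eq_one hp.1)).trans (sub_self _),
    productMoments_nonneg hg, W, ?_, fun v => ?_⟩
  · rintro rfl
    have hgy := hW y hy_isHermitian
    simp only [hg_apply hy_trace, Matrix.zero_apply, zero_mul, Finset.sum_const_zero] at hgy
    exact (sub_neg.2 hfy).ne (ofReal_eq_zero.1 hgy.symm)
  · rw [← hW _ (isHermitian_productMoments v), biform_apply]
    rfl

lemma mem_separableStates_of_partialTransposeForm_pos {σ : Matrix (Fin 4) (Fin 4) ℂ}
    (hσ : σ.IsHermitian) (htrace : momentTrace 3 σ = 1)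
    (hpos : ∀ q : Matrix (Fin 3) (Fin 2) ℂ, q ≠ 0 → 0 < partialTransposeForm q σ) :
    σ ∈ separableStates 3 := by
  by_contra hnot
  let U : Set (Matrix (Fin 4) (Fin 4) ℂ) :=
    {τ | ∀ q : Matrix (Fin 3) (Fin 2) ℂ, q ≠ 0 → 0 < partialTransposeForm q τ}
  have hU : Convex ℝ U := fun τ hτ υ hυ a b ha hb hab q hq =>
    convex_halfSpace_gt (partialTransposeForm q).isLinear 0 (hτ q hq) (hυ q hq) ha hb hab
  obtain ⟨p, ⟨hp, hp_pos⟩, g, hgp, hg, W, hW, hbiform⟩ :=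
    exists_biform_support (isOpen_setOf_partialTransposeForm_pos 2 1) hσ htrace hnot
      maximallyMixed_mem_separableStates
      (hU.segment_subset hpos fun q hq => partialTransposeForm_maximallyMixed_pos hq)
  obtain ⟨q, hq, hzeros⟩ :=
    exists_biform_zero_of_zeros (fun v => hbiform v ▸ zero_le_real.2 (hg v)) hW
  refine (hp_pos q hq).ne' (eq_zero_of_mem_convexHull ?_ ?_ hp hgp)
  · rintro _ ⟨v, -, rfl⟩
    exact hg v
  · rintro _ ⟨v, -, rfl⟩ hv
    have hqv : biform q v = 0 := hzeros v ((hbiform v).trans (ofReal_eq_zero.2 hv))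
    exact (partialTransposeForm_productMoments q v).trans (normSq_eq_zero.2 hqv)

lemma mem_separableStates_of_partialTransposeForm_nonneg {σ : Matrix (Fin 4) (Fin 4) ℂ}
    (hσ : σ.IsHermitian) (htrace : momentTrace 3 σ = 1)
    (hnonneg : ∀ q : Matrix (Fin 3) (Fin 2) ℂ, 0 ≤ partialTransposeForm q σ) :
    σ ∈ separableStates 3 := by
  let γ (t : ℝ) := (1 - t) • σ + t • maximallyMixed 3
  have hγ : Tendsto γ (𝓝[>] 0) (𝓝 σ) := by
    have : Continuous γ := by fun_prop
    simpa only [γ, sub_zero, one_smul, zero_smul, add_zero] using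
      (this.tendsto 0).mono_left nhdsWithin_le_nhds
  refine (isCompact_separableStates 3).isClosed.mem_of_tendsto hγ ?_
  filter_upwards [Ioo_mem_nhdsGT zero_lt_one] with t ht
  refine mem_separableStates_of_partialTransposeForm_pos ?_ ?_ fun q hq => ?_
  · exact (hσ.smul (.all _)).add
      ((isHermitian_of_mem_separableStates maximallyMixed_mem_separableStates).smul (.all _))
  · simp only [γ, map_add, map_smul, htrace, momentTrace_maximallyMixed, smul_eq_mul, mul_one,
      sub_add_cancel]
  · simp only [γ, map_add, map_smul, smul_eq_mul]
    exact add_pos_of_nonneg_of_pos (mul_nonneg (sub_nonneg.2 ht.2.le) (hnonneg q))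
      (mul_pos ht.1 (partialTransposeForm_maximallyMixed_pos hq))

/-! ### Partial transposes of pure states -/

lemma normSq_sum_mul_le {ι : Type*} [Fintype ι] {w : ι → ℝ} (hw : ∀ i, 0 < w i) (x y : ι → ℂ) :
    normSq (∑ i, x i * y i) ≤ (∑ i, normSq (x i) / w i) * ∑ i, w i * normSq (y i) := by
  rw [normSq_eq_norm_sq]
  refine (pow_le_pow_left₀ (norm_nonneg _) (norm_sum_le _ _) 2).trans ?_
  refine Finset.sum_sq_le_sum_mul_sum_of_sq_le_mul _
    (fun i _ => div_nonneg (normSq_nonneg _) (hw i).le)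
    (fun i _ => mul_nonneg (hw i).le (normSq_nonneg _)) fun i _ => ?_
  rw [norm_mul, mul_pow, ← normSq_eq_norm_sq, ← normSq_eq_norm_sq, ← mul_assoc,
    div_mul_cancel₀ _ (hw i).ne']

/-- The contraction of the symmetric vector with coordinates `ψ` against the first `m` qubits of
`q`, as a matrix between the remaining qubits of `q` and of `ψ`; the transpose on the last `n`
qubits swaps its two indices. -/
def contraction {m n : ℕ} (q : Matrix (Fin (m + 1)) (Fin (n + 1)) ℂ) (ψ : Fin (m + n + 1) → ℂ) :
    Matrix (Fin (n + 1)) (Fin (n + 1)) ℂ :=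
  Matrix.of fun b b' => ∑ a, q a b * ψ (addWeight a b')

lemma partialTransposeForm_vecMulVec {m n : ℕ} (q : Matrix (Fin (m + 1)) (Fin (n + 1)) ℂ)
    (ψ : Fin (m + n + 1) → ℂ) :
    partialTransposeForm q (Matrix.vecMulVec ψ (star ψ)) =
      (∑ b, ∑ b', contraction q ψ b b' * conj (contraction q ψ b' b)).re := by
  rw [partialTransposeForm_apply]
  congr 1
  simp only [contraction, Matrix.of_apply, map_sum, Finset.sum_mul_sum, map_mul]
  rw [Finset.sum_comm]
  refine Finset.sum_congr rfl fun b _ => ?_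
  rw [Finset.sum_comm_cycle]
  refine Finset.sum_congr rfl fun b' _ => Finset.sum_congr rfl fun a _ =>
    Finset.sum_congr rfl fun a' _ => ?_
  rw [Matrix.vecMulVec_apply, Pi.star_apply, star_def]
  ring

lemma sum_sum_choose_mul_addWeight (m : ℕ) (f : Fin (m + 2) → ℝ) :
    ∑ b : Fin 2, ∑ a : Fin (m + 1), m.choose a * f (addWeight a b) =
      ∑ k : Fin (m + 2), (m + 1).choose k * f k := by
  have hsucc : ∑ k : Fin (m + 1), (m.choose (k + 1) : ℝ) * f k.succ + f 0 =
      ∑ k : Fin (m + 1), (m.choose k : ℝ) * f k.castSucc := by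
    rw [add_comm]
    trans ∑ k : Fin (m + 2), (m.choose k : ℝ) * f k
    · simp [Fin.sum_univ_succ]
    · simp [Fin.sum_univ_castSucc]
  have hzero (a : Fin (m + 1)) : addWeight a (0 : Fin 2) = a.castSucc := rfl
  have hone (a : Fin (m + 1)) : addWeight a (1 : Fin 2) = a.succ := rfl
  rw [Fin.sum_univ_two, Fin.sum_univ_succ (n := m + 1)]
  simp only [hzero, hone, ← hsucc, Fin.val_zero, Fin.val_succ, Nat.choose_zero_right,
    Nat.choose_succ_succ, Nat.cast_add, add_mul, Finset.sum_add_distrib, Nat.cast_one, one_mul]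
  ring

lemma momentTrace_vecMulVec {n : ℕ} (ψ : Fin (n + 1) → ℂ) :
    momentTrace n (Matrix.vecMulVec ψ (star ψ)) = ∑ k : Fin (n + 1), n.choose k * normSq (ψ k) := by
  simp only [momentTrace_apply, Matrix.vecMulVec_apply, Pi.star_apply, star_def, mul_conj,
    ofReal_re]

lemma re_sum_mul_conj_le {ι : Type*} [Fintype ι] {X : Matrix ι ι ℂ} {Q Ψ : ι → ℝ}
    (hX : ∀ b b', normSq (X b b') ≤ Q b * Ψ b') :
    (∑ b, ∑ b', X b b' * conj (X b' b)).re ≤ (∑ b, Q b) * ∑ b, Ψ b := by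
  have hterm (b b') : (X b b' * conj (X b' b)).re ≤ (Q b * Ψ b' + Q b' * Ψ b) / 2 := by
    have hsq := normSq_nonneg (X b b' - X b' b)
    rw [normSq_sub] at hsq
    linarith [hX b b', hX b' b]
  calc (∑ b, ∑ b', X b b' * conj (X b' b)).re
      ≤ ∑ b, ∑ b', (Q b * Ψ b' + Q b' * Ψ b) / 2 := by
        simp only [re_sum]
        exact Finset.sum_le_sum fun b _ => Finset.sum_le_sum fun b' _ => hterm b b'
    _ = (∑ b, Q b) * ∑ b, Ψ b := by
        simp only [← Finset.sum_div, Finset.sum_add_distrib]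
        rw [Finset.sum_comm (f := fun b b' => Q b' * Ψ b), ← Finset.sum_mul_sum, add_self_div_two]

lemma neg_le_re_sum_mul_conj {X : Matrix (Fin 2) (Fin 2) ℂ} {Q Ψ : Fin 2 → ℝ}
    (hQ : ∀ b, 0 ≤ Q b) (hΨ : ∀ b, 0 ≤ Ψ b) (hX : ∀ b b', normSq (X b b') ≤ Q b * Ψ b') :
    -((∑ b, Q b) * (∑ b, Ψ b) / 2) ≤ (∑ b, ∑ b', X b b' * conj (X b' b)).re := by
  have hexpand : (∑ b, ∑ b', X b b' * conj (X b' b)).re =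
      normSq (X 0 0) + normSq (X 1 1) + 2 * (X 0 1 * conj (X 1 0)).re := by
    simp only [Fin.sum_univ_two, normSq_apply, add_re, mul_re, conj_re, conj_im]
    ring
  have hoffdiag : -((∑ b, Q b) * (∑ b, Ψ b) / 4) ≤ (X 0 1 * conj (X 1 0)).re := by
    refine neg_le_of_abs_le ((abs_re_le_norm _).trans (abs_le_of_sq_le_sq' ?_ ?_).2)
    · calc ‖X 0 1 * conj (X 1 0)‖ ^ 2 = normSq (X 0 1) * normSq (X 1 0) := by
            rw [← normSq_eq_norm_sq, map_mul, normSq_conj]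
        _ ≤ Q 0 * Ψ 1 * (Q 1 * Ψ 0) :=
            mul_le_mul (hX 0 1) (hX 1 0) (normSq_nonneg _) (mul_nonneg (hQ 0) (hΨ 1))
        _ = Q 0 * Q 1 * (Ψ 0 * Ψ 1) := by ring
        _ ≤ ((Q 0 + Q 1) / 2) ^ 2 * ((Ψ 0 + Ψ 1) / 2) ^ 2 := by
            gcongr
            · exact mul_nonneg (hΨ 0) (hΨ 1)
            · linarith [sq_nonneg (Q 0 - Q 1)]
            · linarith [sq_nonneg (Ψ 0 - Ψ 1)]
        _ = ((∑ b, Q b) * (∑ b, Ψ b) / 4) ^ 2 := by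
            rw [Fin.sum_univ_two, Fin.sum_univ_two]
            ring
    · exact div_nonneg (mul_nonneg (Finset.sum_nonneg fun b _ => hQ b)
        (Finset.sum_nonneg fun b _ => hΨ b)) (by norm_num)
  rw [hexpand]
  linarith [normSq_nonneg (X 0 0), normSq_nonneg (X 1 1)]

lemma partialTransposeForm_vecMulVec_mem_Icc {m : ℕ} (q : Matrix (Fin (m + 1)) (Fin 2) ℂ)
    (ψ : Fin (m + 2) → ℂ) :
    partialTransposeForm (n := 1) q (Matrix.vecMulVec ψ (star ψ)) ∈
      Set.Icc (-(binomialNormSq (n := 1) q *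
          momentTrace (m + 1) (Matrix.vecMulVec ψ (star ψ)) / 2))
        (binomialNormSq (n := 1) q * momentTrace (m + 1) (Matrix.vecMulVec ψ (star ψ))) := by
  have hchoose (a : Fin (m + 1)) : (0 : ℝ) < m.choose a := Nat.cast_pos.2 (Nat.choose_pos a.is_le)
  let Q (b : Fin 2) := ∑ a, normSq (q a b) / m.choose a
  let Ψ (b : Fin 2) := ∑ a : Fin (m + 1), m.choose a * normSq (ψ (addWeight a b))
  have hQ : binomialNormSq (n := 1) q = ∑ b, Q b := by
    refine Finset.sum_congr rfl fun b _ => Finset.sum_congr rfl fun a _ => ?_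
    rw [show Nat.choose 1 b = 1 by fin_cases b <;> rfl, Nat.cast_one, mul_one]
  have hΨ : momentTrace (m + 1) (Matrix.vecMulVec ψ (star ψ)) = ∑ b, Ψ b := by
    rw [momentTrace_vecMulVec, ← sum_sum_choose_mul_addWeight m fun k => normSq (ψ k)]
  have hX (b b' : Fin 2) : normSq (contraction (n := 1) q ψ b b') ≤ Q b * Ψ b' :=
    normSq_sum_mul_le hchoose _ _
  rw [partialTransposeForm_vecMulVec, hQ, hΨ]
  exact ⟨neg_le_re_sum_mul_conj
    (fun b => Finset.sum_nonneg fun a _ => div_nonneg (normSq_nonneg _) (hchoose a).le)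
    (fun b => Finset.sum_nonneg fun a _ => mul_nonneg (hchoose a).le (normSq_nonneg _)) hX,
    re_sum_mul_conj_le hX⟩

open scoped MatrixOrder Matrix.Norms.L2Operator in
lemma nonneg_of_posSemidef {n : Type*} [Finite n] {f : Matrix n n ℂ →ₗ[ℝ] ℝ}
    (hf : ∀ ψ, 0 ≤ f (Matrix.vecMulVec ψ (star ψ))) {R : Matrix n n ℂ} (hR : R.PosSemidef) :
    0 ≤ f R := by
  classical
  have := Fintype.ofFinite n
  obtain ⟨B, rfl⟩ := CStarAlgebra.nonneg_iff_eq_star_mul_self.1 hR.nonneg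
  have hsum : star B * B = ∑ k, Matrix.vecMulVec (star (B k)) (star (star (B k))) := by
    ext i j
    simp only [Matrix.star_eq_conjTranspose, Matrix.mul_apply, Matrix.conjTranspose_apply,
      Matrix.sum_apply, Matrix.vecMulVec_apply, Pi.star_apply, star_star]
  rw [hsum, map_sum]
  exact Finset.sum_nonneg fun k _ => hf _

lemma partialTransposeForm_reduction_nonneg {R : Matrix (Fin 4) (Fin 4) ℂ} (hR : R.PosSemidef)
    {α : ℝ} (hα : -(1 / 3) ≤ α) (hα' : α ≤ 2 / 3) (q : Matrix (Fin 3) (Fin 2) ℂ) :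
    0 ≤ partialTransposeForm q ((4 * momentTrace 3 R) • maximallyMixed 3 + α • R) := by
  let f : Matrix (Fin 4) (Fin 4) ℂ →ₗ[ℝ] ℝ :=
    (4 * partialTransposeForm q (maximallyMixed 3)) • momentTrace 3 + α • partialTransposeForm q
  have hf (ψ) : 0 ≤ f (Matrix.vecMulVec ψ (star ψ)) := by
    simp only [f, LinearMap.add_apply, LinearMap.smul_apply, smul_eq_mul]
    obtain ⟨hlower, hupper⟩ := partialTransposeForm_vecMulVec_mem_Icc q ψ
    have htrace : 0 ≤ momentTrace 3 (Matrix.vecMulVec ψ (star ψ)) := by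
      rw [momentTrace_vecMulVec]
      exact Finset.sum_nonneg fun k _ => mul_nonneg (Nat.cast_nonneg _) (normSq_nonneg _)
    have hmixed := mul_le_mul_of_nonneg_right (binomialNormSq_le_partialTransposeForm q) htrace
    have hnorm : 0 ≤ binomialNormSq q * momentTrace 3 (Matrix.vecMulVec ψ (star ψ)) := by
      linarith
    have hscale : -(binomialNormSq q * momentTrace 3 (Matrix.vecMulVec ψ (star ψ)) / 3) ≤
        α * partialTransposeForm q (Matrix.vecMulVec ψ (star ψ)) := by
      rcases le_total 0 α with hα0 | hα0
      · refine le_trans ?_ (mul_le_mul_of_nonneg_left hlower hα0)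
        linarith [mul_le_mul_of_nonneg_right hα' hnorm]
      · refine le_trans ?_ (mul_le_mul_of_nonpos_left hupper hα0)
        linarith [mul_le_mul_of_nonneg_right hα hnorm]
    linarith
  refine (nonneg_of_posSemidef hf hR).trans_eq ?_
  simp only [f, LinearMap.add_apply, LinearMap.smul_apply, map_add, map_smul, smul_eq_mul]
  ring

/-! ### Operators on the symmetric subspace -/

lemma momentTrace_pos {n : ℕ} {R : Matrix (Fin (n + 1)) (Fin (n + 1)) ℂ} (hR : R.PosSemidef)
    (hne : R ≠ 0) : 0 < momentTrace n R := by
  have hdiag (k) : 0 ≤ (R k k).re := (nonneg_iff.1 hR.diag_nonneg).1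
  obtain ⟨k, hk⟩ : ∃ k, (R k k).re ≠ 0 := by
    contrapose! hne
    refine hR.trace_eq_zero_iff.1 (Finset.sum_eq_zero fun k _ => ?_)
    exact Complex.ext (hne k) (nonneg_iff.1 hR.diag_nonneg).2.symm
  rw [momentTrace_apply]
  refine Finset.sum_pos' (fun k _ => mul_nonneg (Nat.cast_nonneg _) (hdiag k))
    ⟨k, Finset.mem_univ k, mul_pos (Nat.cast_pos.2 (Nat.choose_pos k.is_le)) ?_⟩
  exact (hdiag k).lt_of_ne' hk

lemma exists_smul_eq_reduction {R : Matrix (Fin 4) (Fin 4) ℂ} (hR : R.PosSemidef) {α : ℝ}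
    (hα : -(1 / 3) ≤ α) (hα' : α ≤ 2 / 3) :
    ∃ c : ℝ, 0 ≤ c ∧ ∃ τ ∈ separableStates 3,
      c • τ = (4 * momentTrace 3 R) • maximallyMixed 3 + α • R := by
  rcases eq_or_ne R 0 with rfl | hne
  · exact ⟨0, le_rfl, _, maximallyMixed_mem_separableStates, by simp⟩
  have hpos : 0 < (4 + α) * momentTrace 3 R := mul_pos (by linarith) (momentTrace_pos hR hne)
  refine ⟨_, hpos.le, _, mem_separableStates_of_partialTransposeForm_nonneg ?_ ?_ fun q => ?_,
    smul_inv_smul₀ hpos.ne' _⟩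
  · have hmixed := isHermitian_of_mem_separableStates maximallyMixed_mem_separableStates
    exact ((hmixed.smul (.all _)).add (hR.isHermitian.smul (.all _))).smul (.all _)
  · rw [map_smul, map_add, map_smul, map_smul, momentTrace_maximallyMixed, smul_eq_mul,
      smul_eq_mul, smul_eq_mul, mul_one, ← add_mul, inv_mul_cancel₀ hpos.ne']
  · rw [map_smul]
    exact smul_nonneg (inv_nonneg.2 hpos.le) (partialTransposeForm_reduction_nonneg hR hα hα' q)

lemma symProj_eq_submatrix (N : ℕ) :
    symProj N = ((N + 1 : ℝ) • maximallyMixed N).submatrix bitWeight bitWeight := by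
  have hdicke (k : ℕ) (x : Fin N → Fin 2) :
      dicke N k x = if (bitWeight x : ℕ) = k then (((√(N.choose k))⁻¹ : ℝ) : ℂ) else 0 := rfl
  ext x y
  have hN : (N + 1 : ℝ) ≠ 0 := N.cast_add_one_ne_zero
  rw [symProj, Finset.sum_eq_single_of_mem _ (Finset.mem_range.2 (bitWeight x).is_lt)
    fun k _ hk => by rw [hdicke, if_neg hk.symm, zero_mul], hdicke, hdicke, if_pos rfl]
  simp only [Matrix.submatrix_apply, Matrix.smul_apply, maximallyMixed, Matrix.diagonal_apply,
    Fin.ext_iff, eq_comm (a := (bitWeight y : ℕ)), apply_ite star, mul_ite, star_zero, mul_zero,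
    smul_ite, smul_zero]
  congr 1
  rw [star_def, conj_ofReal, ← ofReal_mul, ← mul_inv, Real.mul_self_sqrt (Nat.cast_nonneg _),
    real_smul, ← ofReal_mul, mul_inv, mul_inv_cancel_left₀ hN]

lemma card_filter_bitWeight {N : ℕ} (k : Fin (N + 1)) :
    (Finset.univ.filter fun x : Fin N → Fin 2 => bitWeight x = k).card = N.choose k := by
  have hbit (x : Fin N → Fin 2) (i : Fin N) : (if x i = 1 then 1 else 0) = x i := by
    split_ifs <;> omega
  trans (Finset.powersetCard k (Finset.univ : Finset (Fin N))).card
  swap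
  · rw [Finset.card_powersetCard, Finset.card_fin]
  refine Finset.card_nbij' (fun x => Finset.univ.filter fun i => x i = 1)
    (fun s i => if i ∈ s then 1 else 0) ?_ ?_ ?_ ?_
  · intro x hx
    simpa [bitWeight, Fin.ext_iff] using hx
  · intro s hs
    simpa [bitWeight, Fin.ext_iff (b := k)] using hs
  · intro x _
    simpa [funext_iff] using hbit x
  · intro s _
    simp

lemma trace_submatrix_bitWeight {N : ℕ} {R : Matrix (Fin (N + 1)) (Fin (N + 1)) ℂ}
    (hR : R.IsHermitian) :
    (R.submatrix (bitWeight (N := N)) bitWeight).trace = momentTrace N R := by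
  rw [Matrix.trace, ← Finset.sum_fiberwise _ (bitWeight (N := N)), momentTrace_apply, ofReal_sum]
  refine Finset.sum_congr rfl fun k _ => ?_
  rw [Finset.sum_congr rfl fun x hx => show _ = R k k by
    rw [Matrix.diag_apply, Matrix.submatrix_apply, (Finset.mem_filter.1 hx).2],
    Finset.sum_const, card_filter_bitWeight, nsmul_eq_mul, ofReal_mul, ofReal_natCast]
  exact congrArg _ (hR.coe_re_apply_self k).symm

lemma exists_posSemidef_submatrix_bitWeight_eq {N : ℕ}
    {ρ : Matrix (Fin N → Fin 2) (Fin N → Fin 2) ℂ} (hρ : ρ.PosSemidef)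
    (hsupp : symProj N * ρ * symProj N = ρ) :
    ∃ R : Matrix (Fin (N + 1)) (Fin (N + 1)) ℂ,
      R.PosSemidef ∧ R.submatrix bitWeight bitWeight = ρ := by
  obtain ⟨r, hr⟩ := bitWeight_surjective.hasRightInverse (f := bitWeight (N := N))
  refine ⟨ρ.submatrix r r, hρ.submatrix r, ?_⟩
  ext x y
  rw [Matrix.submatrix_apply, Matrix.submatrix_apply, ← hsupp, symProj_eq_submatrix]
  simp only [Matrix.mul_apply, Matrix.submatrix_apply, hr _]

lemma exists_productMoments_eq_smul {n : ℕ} (hn : n ≠ 0) {c : ℝ} (hc : 0 ≤ c) (v : Fin 2 → ℂ) :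
    ∃ u, productMoments n u = c • productMoments n v := by
  refine ⟨(√(c ^ (n⁻¹ : ℝ)) : ℂ) • v, ?_⟩
  rw [productMoments_smul, normSq_ofReal, Real.mul_self_sqrt (Real.rpow_nonneg hc _),
    Real.rpow_inv_natCast_pow hc hn]

lemma fullySep_submatrix_bitWeight {N : ℕ} (hN : N ≠ 0) {c : ℝ} (hc : 0 ≤ c)
    {σ : Matrix (Fin (N + 1)) (Fin (N + 1)) ℂ} (hσ : σ ∈ separableStates N) :
    FullySep ((c • σ).submatrix (bitWeight (N := N)) bitWeight) := by
  obtain ⟨K, -, w, hw, z, hz, rfl⟩ := exists_fin_sum_eq_of_mem_convexHull hσ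
  choose v _ hv using hz
  choose u hu using fun k => exists_productMoments_eq_smul hN (mul_nonneg hc (hw.1 k)) (v k)
  refine ⟨K, fun k _ => Matrix.vecMulVec (u k) (star (u k)),
    fun k _ => Matrix.posSemidef_vecMulVec_self_star _, fun x y => ?_⟩
  simp only [Matrix.submatrix_apply, Finset.smul_sum, smul_smul, ← hv, ← hu, Matrix.sum_apply]
  simp only [productMoments, Matrix.vecMulVec_apply, Pi.star_apply, monomials_bitWeight, star_prod,
    Finset.prod_mul_distrib]

/-- Reduction map on the three-qubit symmetric subspace: full separability
for `-1/3 ≤ α ≤ 2/3`. -/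
theorem stmt4 (ρ : Matrix (Fin 3 → Fin 2) (Fin 3 → Fin 2) ℂ) (hρ : ρ.PosSemidef)
    (hsupp : symProj 3 * ρ * symProj 3 = ρ)
    (α : ℝ) (hα1 : -(1 / 3 : ℝ) ≤ α) (hα2 : α ≤ 2 / 3) :
    FullySep (ρ.trace • symProj 3 + (α : ℂ) • ρ) := by
  obtain ⟨R, hR, rfl⟩ := exists_posSemidef_submatrix_bitWeight_eq hρ hsupp
  obtain ⟨c, hc, τ, hτ, hreduction⟩ := exists_smul_eq_reduction hR hα1 hα2
  convert fullySep_submatrix_bitWeight three_ne_zero hc hτ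
  rw [hreduction, trace_submatrix_bitWeight hR.isHermitian, symProj_eq_submatrix]
  have hfour : ((3 : ℕ) + 1 : ℝ) = 4 := by norm_num
  ext x y
  simp only [Matrix.add_apply, Matrix.smul_apply, Matrix.submatrix_apply, coe_smul, smul_smul,
    hfour, mul_comm]
end
end
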